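/- Let Ω₀ be a smooth, origin-symmetric, strictly convex body in ℝⁿ (n ≥ 2), let f : S^{n−1} → (0,∞) be smooth and even, let φ : (0,∞) → (0,∞) be smooth, and assume Condition (i) or Condition (ii) holds. Let Ω_t be a smooth, origin-symmetric, strictly convex solution of the flow on [0,∞) with initial body Ω₀, with support functions h(·,t) and radial functions ρ(·,t). Then there exists a constant C > 0, independent of t, such that |∇h(x,t)| ≤ C for all (x,t) ∈ S^{n−1} × (0,∞) and |∇ρ(u,t)| ≤ C for all (u,t) ∈ S^{n−1} × (0,∞). -/

import Mathlib

/-!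
Write `h` for the support function at time `t`, `ρ` for the radial function, `σ` for the surface
measure, `a = f / φ(1/h)` and `w = h det(∇²h + hI) / (|∇h|² + h²)^{n/2}` (`gaussJac`). The flow
reads `∂ₜ log h = 1 - η a / w`.

The map `gaussDir`, sending a normal `x` to the direction of the boundary point with normal `x`, is
a bijection of the sphere which pushes `w σ` forward to `σ` (`IsSupportFn.integral_gaussDir`). This
follows from the change of variables formula for the homogeneous extension `x ↦ ‖x‖ ∇h(x)` together
with polar coordinates. In particular `∫ w = |S^{n-1}| = η ∫ a`, and two quantities are monotone.

* `∫ log ρ` does not decrease (`IsFlowSol.logRadial_le`). The radial function itself is never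
  differentiated in time: since a body lies in each of its supporting half-spaces, the increment of
  `∫ log ρ` from time `t` to time `s` is at most that of `s ↦ ∫ w_t log h_s`, whose derivative at
  `s = t` is `∫ (w - η a) = 0`. Applied with `s < t` this bounds the backward increments.
* If `R'(s) = 1 / (s φ(s))`, then `∫ f R(1/h)` does not decrease (`IsFlowSol.monotoneOn_entropy`):
  its derivative is `∫ (η a² / w - a) ≥ 0`, by `η a² / w ≥ 2a - w / η`.

A symmetric body lies in the slab `|⟪y, x₀⟫| ≤ h(x₀)`, hence
`∫ log ρ ≤ |S^{n-1}| log h(x₀) + ∫ -log |⟪u, x₀⟫|`, and the last integral is finite and independent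
of `x₀`. The first monotone quantity therefore bounds `h` from below by a constant `c > 0`
(`exists_lower_bound`). A symmetric body with `h(x₀)` large contains a long centred segment, so `h`
is large off a thin band around a great sphere, which has small measure. For increasing `R` this
makes `∫ f R(1/h)` small, and for decreasing `R` it makes it large; the second monotone quantity
excludes either, which bounds `h` from above by a constant `L` (`exists_upper_bound_mono`,
`exists_upper_bound_anti`).

Finally `|∇h| ≤ L`, since `∇h(x)` is a boundary point of the body, and `|∇ρ| ≤ 2 L² / c`, since
`1/ρ` is Lipschitz with constant `1/c` and at least `1/(2L)` near the sphere.
-/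

noncomputable section

open Metric MeasureTheory Set Filter Topology
open scoped RealInnerProductSpace NNReal

/-- Abbreviation for `n`-dimensional Euclidean space. -/
abbrev Euc (n : ℕ) : Type := EuclideanSpace ℝ (Fin n)

/-- The unit sphere `S^{n-1}` in `ℝⁿ`, as a set. -/
abbrev USphere (n : ℕ) : Set (Euc n) := Metric.sphere (0 : Euc n) 1

/-- The surface (spherical Lebesgue) measure on the unit sphere. -/
def sphMeasure (n : ℕ) : Measure (USphere n) :=
  (volume : Measure (Euc n)).toSphere

/-- Total surface measure `|S^{n-1}|` of the unit sphere. -/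
def sphArea (n : ℕ) : ℝ := (sphMeasure n Set.univ).toReal

/-- Integral over the unit sphere with respect to the spherical Lebesgue measure. -/
def sphInt (n : ℕ) (g : Euc n → ℝ) : ℝ :=
  ∫ x : USphere n, g x ∂(sphMeasure n)

/-- The covariant (spherical) gradient on `S^{n-1}` of the restriction of `F`,
i.e. the tangential component of the Euclidean gradient of `F`. -/
def sphGrad (n : ℕ) (F : Euc n → ℝ) (x : Euc n) : Euc n :=
  gradient F x - ⟪gradient F x, x⟫ • x

/-- `√(|∇h|² + h²)` for the (1-homogeneous extension of the) function `F` at `x`. -/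
def radTerm (n : ℕ) (F : Euc n → ℝ) (x : Euc n) : ℝ :=
  Real.sqrt (‖sphGrad n F x‖ ^ 2 + F x ^ 2)

/-- The Euclidean Hessian operator of `F` at `x`. For a positively 1-homogeneous `F`
this operator kills `x` and restricts on `x^⊥` to the matrix `∇²h + hI` of the
spherical Hessian. -/
def hessOp (n : ℕ) (F : Euc n → ℝ) (x : Euc n) : Euc n →L[ℝ] Euc n :=
  fderiv ℝ (gradient F) x

/-- `det(∇²h + hI)` at `x ∈ S^{n-1}`: the determinant of the restriction of the Euclidean
Hessian of the 1-homogeneous extension to `x^⊥`, computed as the determinant of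
`Hess F + x ⊗ x` on all of `ℝⁿ` (the Hessian of a 1-homogeneous function kills `x`). -/
def sphDet (n : ℕ) (F : Euc n → ℝ) (x : Euc n) : ℝ :=
  LinearMap.det
    ((hessOp n F x + (innerSL ℝ x).smulRight x : Euc n →L[ℝ] Euc n) : Euc n →ₗ[ℝ] Euc n)

/-- `F` is the (1-homogeneously extended) support function of a smooth strictly convex
body with the origin in its interior: it is smooth away from the origin, positively
1-homogeneous, positive, and `∇²h + hI` is positive definite on each tangent space. -/
structure IsSupportFn (n : ℕ) (F : Euc n → ℝ) : Prop where
  smooth : ContDiffOn ℝ (⊤ : ℕ∞) F {(0 : Euc n)}ᶜ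
  homog : ∀ c : ℝ, 0 < c → ∀ x : Euc n, F (c • x) = c * F x
  pos : ∀ x ∈ USphere n, 0 < F x
  posdef : ∀ x ∈ USphere n, ∀ v : Euc n, v ≠ 0 → ⟪x, v⟫ = 0 →
    0 < ⟪v, hessOp n F x v⟫

/-- The convex body determined by the support function `F`. -/
def bodyOf (n : ℕ) (F : Euc n → ℝ) : Set (Euc n) :=
  {y | ∀ x ∈ USphere n, ⟪x, y⟫ ≤ F x}

/-- The radial function of the convex body with support function `F`. -/
def radialFn (n : ℕ) (F : Euc n → ℝ) (u : Euc n) : ℝ :=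
  sSup {r : ℝ | 0 < r ∧ r • u ∈ bodyOf n F}

/-- The normalization factor `η` of the flow. -/
def flowEta (n : ℕ) (f : Euc n → ℝ) (φ : ℝ → ℝ) (h : Euc n → ℝ) : ℝ :=
  sphArea n / sphInt n (fun x => f x / φ (1 / h x))

/-- `H : ℝ → Euc n → ℝ` is (the family of support functions of) a smooth, origin-symmetric,
strictly convex solution of the flow on the time interval `J`. -/
structure IsFlowSol (n : ℕ) (f : Euc n → ℝ) (φ : ℝ → ℝ) (J : Set ℝ)
    (H : ℝ → Euc n → ℝ) : Prop where
  smooth : ContDiffOn ℝ (⊤ : ℕ∞) (fun p : ℝ × Euc n => H p.1 p.2) (J ×ˢ {(0 : Euc n)}ᶜ)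
  body : ∀ t ∈ J, IsSupportFn n (H t)
  symm : ∀ t ∈ J, ∀ x : Euc n, H t (-x) = H t x
  eqn : ∀ t ∈ J, ∀ x ∈ USphere n,
    HasDerivWithinAt (fun s => H s x)
      (H t x - flowEta n f φ (H t) * f x * radTerm n (H t) x ^ n /
        (φ (1 / H t x) * sphDet n (H t) x)) J t

/-- Condition (i) of the Orlicz-Aleksandrov flow theorem. -/
def CondI (n : ℕ) (f : Euc n → ℝ) (φ : ℝ → ℝ) (h₀ : Euc n → ℝ) : Prop :=
  ∃ R : ℝ → ℝ, (∀ s ∈ Ioi (0 : ℝ), 0 < R s) ∧ StrictMonoOn R (Ioi 0) ∧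
    Tendsto R (𝓝[>] (0 : ℝ)) (𝓝 0) ∧ Tendsto R atTop atTop ∧
    (∀ s ∈ Ioi (0 : ℝ), IntegrableOn (fun t => 1 / (t * φ t)) (Ioo 0 s) ∧
      R s = ∫ t in Ioo (0 : ℝ) s, 1 / (t * φ t)) ∧
    (∀ s ∈ Ioi (0 : ℝ), HasDerivAt R (1 / (s * φ s)) s ∧ 1 / (s * φ s) ≠ 0) ∧
    ∃ Chat : ℝ, 0 < Chat ∧
      (∀ θ ∈ USphere n,
        sphInt n (fun x => f x * R (1 / |⟪x, θ⟫|)) ≤ Chat) ∧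
      Chat < sphInt n (fun x => f x * R (1 / h₀ x))

/-- Condition (ii) of the Orlicz-Aleksandrov flow theorem. -/
def CondII (φ : ℝ → ℝ) : Prop :=
  ∃ R : ℝ → ℝ, (∀ s ∈ Ioi (0 : ℝ), 0 < R s) ∧ StrictAntiOn R (Ioi 0) ∧
    Tendsto R (𝓝[>] (0 : ℝ)) atTop ∧ Tendsto R atTop (𝓝 0) ∧
    (∀ s ∈ Ioi (0 : ℝ), IntegrableOn (fun t => 1 / (t * φ t)) (Ioi s) ∧
      R s = ∫ t in Ioi s, 1 / (t * φ t)) ∧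
    (∀ s ∈ Ioi (0 : ℝ), HasDerivAt R (-(1 / (s * φ s))) s ∧ 1 / (s * φ s) ≠ 0)

/-! ### Calculus of support functions -/

section SupportFn

variable {n : ℕ} {F : Euc n → ℝ}

lemma IsSupportFn.contDiffAt (hF : IsSupportFn n F) {x : Euc n} (hx : x ≠ 0) :
    ContDiffAt ℝ (⊤ : ℕ∞) F x :=
  hF.smooth.contDiffAt (isOpen_compl_singleton.mem_nhds hx)

lemma IsSupportFn.differentiableAt (hF : IsSupportFn n F) {x : Euc n} (hx : x ≠ 0) :
    DifferentiableAt ℝ F x :=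
  (hF.contDiffAt hx).differentiableAt (by simp)

lemma inner_grad_eq (x v : Euc n) : ⟪gradient F x, v⟫ = fderiv ℝ F x v := by
  simp [gradient, InnerProductSpace.toDual_symm_apply]

lemma IsSupportFn.contDiffOn_gradient (hF : IsSupportFn n F) :
    ContDiffOn ℝ (⊤ : ℕ∞) (gradient F) {(0 : Euc n)}ᶜ := by
  have h := hF.smooth.fderiv_of_isOpen (m := (⊤ : ℕ∞)) isOpen_compl_singleton (by simp)
  exact (InnerProductSpace.toDual ℝ (Euc n)).symm.contDiff.comp_contDiffOn h

lemma IsSupportFn.hasFDerivAt_gradient (hF : IsSupportFn n F) {x : Euc n} (hx : x ≠ 0) :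
    HasFDerivAt (gradient F) (hessOp n F x) x :=
  (((hF.contDiffOn_gradient).contDiffAt (isOpen_compl_singleton.mem_nhds hx)).differentiableAt
    (by simp)).hasFDerivAt

lemma IsSupportFn.continuousOn_hessOp (hF : IsSupportFn n F) :
    ContinuousOn (hessOp n F) {(0 : Euc n)}ᶜ :=
  hF.contDiffOn_gradient.continuousOn_fderiv_of_isOpen isOpen_compl_singleton (by simp)

lemma IsSupportFn.gradient_smul (hF : IsSupportFn n F) {c : ℝ} (hc : 0 < c) (x : Euc n) :
    gradient F (c • x) = gradient F x := by
  have h1 : (fun y => F (c • y)) = fun y => c * F y := funext fun y => hF.homog c hc y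
  have h2 : fderiv ℝ (fun y => F (c • y)) x = c • fderiv ℝ F (c • x) :=
    fderiv_comp_smul (f := F) c
  have h3 : fderiv ℝ (fun y => c * F y) x = c • fderiv ℝ F x := by
    have := fderiv_const_smul_field (𝕜 := ℝ) (f := F) c
    simpa using! congrFun this x
  rw [h1, h3] at h2
  have h4 := smul_right_injective _ hc.ne' h2
  simp only [gradient, h4]

lemma IsSupportFn.hessOp_smul (hF : IsSupportFn n F) {c : ℝ} (hc : 0 < c) (x : Euc n) :
    c • hessOp n F (c • x) = hessOp n F x := by
  have h1 : (fun y => gradient F (c • y)) = gradient F := funext fun y => hF.gradient_smul hc y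
  have h2 : fderiv ℝ (fun y => gradient F (c • y)) x = c • fderiv ℝ (gradient F) (c • x) :=
    fderiv_comp_smul (f := gradient F) c
  rw [h1] at h2
  exact h2.symm

/-- Euler's relation for `F`. -/
lemma IsSupportFn.inner_gradient_self (hF : IsSupportFn n F) {x : Euc n} (hx : x ≠ 0) :
    ⟪gradient F x, x⟫ = F x := by
  rw [inner_grad_eq]
  have hd : HasDerivAt (fun s : ℝ => F (s • x)) (fderiv ℝ F x x) 1 := by
    have h1 : HasDerivAt (fun s : ℝ => s • x) x 1 := by
      simpa using (hasDerivAt_id (1 : ℝ)).smul_const x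
    have h2 : HasFDerivAt F (fderiv ℝ F x) ((1 : ℝ) • x) := by
      rw [one_smul]; exact (hF.differentiableAt hx).hasFDerivAt
    exact h2.comp_hasDerivAt (1 : ℝ) h1
  have hd' : HasDerivAt (fun s : ℝ => F (s • x)) (F x) 1 := by
    have h3 : HasDerivAt (fun s : ℝ => s * F x) (F x) 1 := by
      simpa using (hasDerivAt_id (1 : ℝ)).mul_const (F x)
    refine h3.congr_of_eventuallyEq ?_
    filter_upwards [lt_mem_nhds (zero_lt_one' ℝ)] with s hs using hF.homog s hs x
  exact hd.unique hd'

/-- Euler's relation for the `0`-homogeneous gradient: the Hessian kills the radial direction. -/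
lemma IsSupportFn.hessOp_self (hF : IsSupportFn n F) {x : Euc n} (hx : x ≠ 0) :
    hessOp n F x x = 0 := by
  have hd : HasDerivAt (fun s : ℝ => gradient F (s • x)) (hessOp n F x x) 1 := by
    have h1 : HasDerivAt (fun s : ℝ => s • x) x 1 := by
      simpa using (hasDerivAt_id (1 : ℝ)).smul_const x
    have h2 : HasFDerivAt (gradient F) (hessOp n F x) ((1 : ℝ) • x) := by
      rw [one_smul]; exact hF.hasFDerivAt_gradient hx
    exact h2.comp_hasDerivAt (1 : ℝ) h1
  have hd' : HasDerivAt (fun s : ℝ => gradient F (s • x)) 0 1 := by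
    refine (hasDerivAt_const (1 : ℝ) (gradient F x)).congr_of_eventuallyEq ?_
    filter_upwards [lt_mem_nhds (zero_lt_one' ℝ)] with s hs using hF.gradient_smul hs x
  exact hd.unique hd'

/-- The image of the Hessian is tangential; this is the derivative of Euler's relation
`⟪∇F x, x⟫ = F x` and does not use the symmetry of the Hessian. -/
lemma IsSupportFn.inner_hessOp (hF : IsSupportFn n F) {x : Euc n} (hx : x ≠ 0) (v : Euc n) :
    ⟪x, hessOp n F x v⟫ = 0 := by
  have h1 : HasFDerivAt (fun y => ⟪gradient F y, y⟫) (fderiv ℝ F x) x := by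
    refine (hF.differentiableAt hx).hasFDerivAt.congr_of_eventuallyEq ?_
    filter_upwards [isOpen_compl_singleton.mem_nhds hx] with y hy
    exact hF.inner_gradient_self hy
  have h2 := (hF.hasFDerivAt_gradient hx).inner ℝ (hasFDerivAt_id x)
  have h3 := congrArg (fun L => L v) (h1.unique h2)
  simp [fderivInnerCLM_apply] at h3
  rwa [real_inner_comm]

/-- The Hessian at a unit vector is positive off the radial direction. -/
lemma IsSupportFn.hess_pos (hF : IsSupportFn n F) {x : Euc n} (hx : ‖x‖ = 1) {v : Euc n}
    (hv : v ≠ ⟪x, v⟫ • x) : 0 < ⟪v, hessOp n F x v⟫ := by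
  have hx0 : x ≠ 0 := by rintro rfl; simp at hx
  have h1 := hF.posdef x (by simpa using hx) (v - ⟪x, v⟫ • x) (sub_ne_zero.2 hv) (by
    simp [inner_sub_right, inner_smul_right, hx])
  simpa [inner_sub_left, inner_smul_left, hF.hessOp_self hx0, hF.inner_hessOp hx0] using h1

lemma IsSupportFn.zero (hF : IsSupportFn n F) : F 0 = 0 := by
  have := hF.homog 2 two_pos 0
  simp at this; linarith

/-- On the sphere a support function lies strictly above its tangent functional except at the point
of tangency. -/
lemma IsSupportFn.inner_gradient_lt (hF : IsSupportFn n F) {x y : Euc n} (hx : ‖x‖ = 1)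
    (hy : ‖y‖ = 1) (hxy : x ≠ y) : ⟪gradient F x, y⟫ < F y := by
  have hx0 : x ≠ 0 := by rintro rfl; simp at hx
  by_cases hanti : y = -x
  · have h1 := hF.pos y (by simpa using hy)
    have h2 := hF.pos x (by simpa using hx)
    have h3 : ⟪gradient F x, y⟫ = -F x := by
      rw [hanti, inner_neg_right, hF.inner_gradient_self hx0]
    linarith
  set v := y - x with hv
  -- `x` and `y` are linearly independent, so the segment misses the origin and is never radial
  have key : ∀ a b : ℝ, a • x + b • y = 0 → a = 0 ∧ b = 0 := by
    intro a b hab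
    have e1 : a • x = -(b • y) := eq_neg_of_add_eq_zero_left hab
    have e2 : |a| = |b| := by
      have := congrArg norm e1; simpa [norm_smul, hx, hy] using this
    by_cases hb : b = 0
    · subst hb; simpa using e2
    · exfalso
      rcases abs_eq_abs.1 e2 with h | h
      · rw [h, ← smul_neg] at e1
        have := smul_right_injective _ hb e1
        exact hanti (by rw [this]; simp)
      · rw [h, neg_smul, neg_inj] at e1
        exact hxy (smul_right_injective _ hb e1)
  have hγ : ∀ s : ℝ, x + s • v ≠ 0 := by
    intro s hs
    have := key (1 - s) s (by rw [← hs, hv]; module)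
    linarith [this.1, this.2]
  have hγd : ∀ s : ℝ, HasDerivAt (fun s : ℝ => x + s • v) v s := fun s => by
    simpa using ((hasDerivAt_id s).smul_const v).const_add x
  have hg1 : ∀ s : ℝ, HasDerivAt (fun s : ℝ => F (x + s • v)) ⟪gradient F (x + s • v), v⟫ s := by
    intro s
    rw [inner_grad_eq]
    exact (hF.differentiableAt (hγ s)).hasFDerivAt.comp_hasDerivAt s (hγd s)
  have hg2 : ∀ s : ℝ, HasDerivAt (fun s : ℝ => ⟪gradient F (x + s • v), v⟫)
      ⟪hessOp n F (x + s • v) v, v⟫ s := by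
    intro s
    have := ((hF.hasFDerivAt_gradient (hγ s)).comp_hasDerivAt s (hγd s)).inner ℝ
      (hasDerivAt_const s v)
    simpa using! this
  have hpos : ∀ s : ℝ, 0 < ⟪hessOp n F (x + s • v) v, v⟫ := by
    intro s
    set z := x + s • v
    have hz : 0 < ‖z‖ := norm_pos_iff.2 (hγ s)
    have h1 : 0 < ⟪v, hessOp n F (‖z‖⁻¹ • z) v⟫ := by
      apply hF.hess_pos (by rw [norm_smul, norm_inv, norm_norm, inv_mul_cancel₀ hz.ne'])
      intro h
      set c := ⟪‖z‖⁻¹ • z, v⟫ * ‖z‖⁻¹ with hc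
      have h' : v = c • z := by rw [hc, mul_smul]; exact h
      have := key (-1 - c * (1 - s)) (1 - c * s) (by
        have : v - c • z = 0 := sub_eq_zero.2 h'
        rw [← this]; simp only [z, hv]; module)
      have hc0 : c = 0 := by linear_combination -this.1 - this.2
      simpa [hc0] using this.2
    have h2 := hF.hessOp_smul (inv_pos.2 hz) z
    rw [real_inner_comm, ← h2]
    simp only [_root_.smul_apply, inner_smul_right]
    exact mul_pos (inv_pos.2 hz) h1
  have hmono : StrictMono (fun s : ℝ => ⟪gradient F (x + s • v), v⟫) :=
    strictMono_of_hasDerivAt_pos hg2 hpos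
  obtain ⟨s, hs, hs'⟩ := exists_hasDerivAt_eq_slope (fun s : ℝ => F (x + s • v)) _ one_pos
    (fun s _ => (hg1 s).continuousAt.continuousWithinAt) (fun s _ => hg1 s)
  have h0 := hmono hs.1
  simp only [zero_smul, add_zero, one_smul, sub_zero, div_one] at hs' h0
  rw [hs', show x + v = y by simp [hv]] at h0
  rw [hv, inner_sub_right, hF.inner_gradient_self hx0] at h0
  linarith

lemma IsSupportFn.inner_gradient_le (hF : IsSupportFn n F) {x y : Euc n} (hx : ‖x‖ = 1)
    (hy : ‖y‖ = 1) : ⟪gradient F x, y⟫ ≤ F y := by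
  by_cases h : x = y
  · subst h
    exact (hF.inner_gradient_self (by rintro rfl; simp at hx)).le
  · exact (hF.inner_gradient_lt hx hy h).le

lemma IsSupportFn.gradient_ne_zero (hF : IsSupportFn n F) {x : Euc n} (hx : ‖x‖ = 1) :
    gradient F x ≠ 0 := by
  intro h
  have h1 := hF.inner_gradient_self (x := x) (by rintro rfl; simp at hx)
  have h2 := hF.pos x (by simpa using hx)
  rw [h, inner_zero_left] at h1
  linarith

lemma IsSupportFn.radTerm_eq (hF : IsSupportFn n F) {x : Euc n} (hx : ‖x‖ = 1) :
    radTerm n F x = ‖gradient F x‖ := by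
  have hx0 : x ≠ 0 := by rintro rfl; simp at hx
  have h : ‖sphGrad n F x‖ ^ 2 + F x ^ 2 = ‖gradient F x‖ ^ 2 := by
    rw [sphGrad, norm_sub_sq_real, hF.inner_gradient_self hx0, inner_smul_right,
      hF.inner_gradient_self hx0, norm_smul, hx]
    simp; ring
  rw [radTerm, h, Real.sqrt_sq (norm_nonneg _)]

/-- `Hess F + x ⊗ x`, the operator whose determinant is `sphDet`. -/
def hessAug (n : ℕ) (F : Euc n → ℝ) (x : Euc n) : Euc n →L[ℝ] Euc n :=
  hessOp n F x + (innerSL ℝ x).smulRight x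

lemma IsSupportFn.hessAug_pos (hF : IsSupportFn n F) {x : Euc n} (hx : ‖x‖ = 1) {v : Euc n}
    (hv : v ≠ 0) : 0 < ⟪v, hessAug n F x v⟫ := by
  have hx0 : x ≠ 0 := by rintro rfl; simp at hx
  have e : ⟪v, hessAug n F x v⟫ = ⟪v, hessOp n F x v⟫ + ⟪x, v⟫ ^ 2 := by
    simp [hessAug, inner_add_right, inner_smul_right, real_inner_comm x v]; ring
  rw [e]
  by_cases h : v = ⟪x, v⟫ • x
  · have h1 : ⟪x, v⟫ ≠ 0 := by
      intro h0; rw [h0, zero_smul] at h; exact hv h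
    have h2 : hessOp n F x v = 0 := by rw [h]; simp [hF.hessOp_self hx0]
    rw [h2, inner_zero_right]; positivity
  · have := hF.hess_pos hx h
    positivity

/-- The segment from the positive definite operator `hessAug` to the identity consists of invertible
operators, so the determinant does not change sign along it. -/
lemma IsSupportFn.sphDet_pos (hF : IsSupportFn n F) {x : Euc n} (hx : ‖x‖ = 1) :
    0 < sphDet n F x := by
  change 0 < LinearMap.det (hessAug n F x : Euc n →ₗ[ℝ] Euc n)
  set M := hessAug n F x
  let p : ℝ → (Euc n →L[ℝ] Euc n) := fun s => s • M + (1 - s) • ContinuousLinearMap.id ℝ _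
  let d : ℝ → ℝ := fun s => (p s).det
  have hdc : Continuous d := by
    refine ContinuousLinearMap.continuous_det.comp ?_
    fun_prop
  have hne : ∀ s ∈ Icc (0 : ℝ) 1, d s ≠ 0 := by
    intro s hs h0
    obtain ⟨v, hv, hv0⟩ :=
      (Submodule.ne_bot_iff _).1 (LinearMap.bot_lt_ker_of_det_eq_zero h0).ne'
    have h1 : ⟪v, p s v⟫ = 0 := by
      have : p s v = 0 := hv
      rw [this, inner_zero_right]
    have h2 : ⟪v, p s v⟫ = s * ⟪v, M v⟫ + (1 - s) * ‖v‖ ^ 2 := by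
      simp [p, inner_add_right, inner_smul_right]
    have h3 := hF.hessAug_pos hx hv0
    have h4 : 0 < ‖v‖ ^ 2 := by positivity
    rcases eq_or_lt_of_le hs.1 with h | h
    · rw [h1, ← h] at h2; linarith
    · have := mul_pos h h3
      have := mul_nonneg (sub_nonneg.2 hs.2) h4.le
      linarith
  have h0 : d 0 = 1 := by simp [d, p, ContinuousLinearMap.det]
  have h1 : d 1 = LinearMap.det (M : Euc n →ₗ[ℝ] Euc n) := by
    simp [d, p, ContinuousLinearMap.det]
  rw [← h1]
  by_contra hle
  push Not at hle
  obtain ⟨s, hs, hs0⟩ := intermediate_value_Icc' zero_le_one hdc.continuousOn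
    (show (0 : ℝ) ∈ Icc (d 1) (d 0) from ⟨hle, by rw [h0]; exact zero_le_one⟩)
  exact hne s hs hs0

end SupportFn

/-! ### The gauge of the body and its radial function -/

section Gauge

variable {n : ℕ} {F : Euc n → ℝ}

/-- The gauge (Minkowski functional, the reciprocal of the radial function) of the body with
support function `F`, written as the support function of its polar. -/
def bodyGauge (n : ℕ) (F : Euc n → ℝ) (u : Euc n) : ℝ :=
  sSup ((fun x => ⟪x, u⟫ / F x) '' USphere n)

lemma USphere_ne_zero {x : Euc n} (hx : x ∈ USphere n) : x ≠ 0 := by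
  rintro rfl; simp at hx

lemma USphere_nonempty [NeZero n] : (USphere n).Nonempty :=
  (NormedSpace.sphere_nonempty (E := Euc n) (x := 0) (r := 1)).2 zero_le_one

lemma IsSupportFn.continuousOn_ratio (hF : IsSupportFn n F) (u : Euc n) :
    ContinuousOn (fun x => ⟪x, u⟫ / F x) (USphere n) := by
  refine ContinuousOn.div (by fun_prop) ?_ fun x hx => (hF.pos x hx).ne'
  exact hF.smooth.continuousOn.mono fun x hx => USphere_ne_zero hx

lemma IsSupportFn.inner_le_gauge (hF : IsSupportFn n F) {x : Euc n} (hx : x ∈ USphere n)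
    (u : Euc n) : ⟪x, u⟫ ≤ bodyGauge n F u * F x := by
  rw [← div_le_iff₀ (hF.pos x hx)]
  exact le_csSup ((isCompact_sphere _ _).bddAbove_image (hF.continuousOn_ratio u))
    (mem_image_of_mem _ hx)

lemma IsSupportFn.exists_gauge [NeZero n] (hF : IsSupportFn n F) (u : Euc n) :
    ∃ x ∈ USphere n, bodyGauge n F u * F x = ⟪x, u⟫ := by
  obtain ⟨x, hx, hx'⟩ := (isCompact_sphere (0 : Euc n) 1).exists_sSup_image_eq USphere_nonempty
    (hF.continuousOn_ratio u)
  refine ⟨x, hx, ?_⟩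
  rw [bodyGauge, hx', div_mul_cancel₀ _ (hF.pos x hx).ne']

lemma IsSupportFn.gauge_le [NeZero n] (hF : IsSupportFn n F) {u : Euc n} {a : ℝ}
    (h : ∀ x ∈ USphere n, ⟪x, u⟫ ≤ a * F x) : bodyGauge n F u ≤ a := by
  obtain ⟨x, hx, hx'⟩ := hF.exists_gauge u
  exact le_of_mul_le_mul_right (hx' ▸ h x hx) (hF.pos x hx)

lemma IsSupportFn.norm_div_le_gauge (hF : IsSupportFn n F) {M : ℝ} (hM : 0 < M)
    (hFM : ∀ x ∈ USphere n, F x ≤ M) {u : Euc n} (hu : u ≠ 0) : ‖u‖ / M ≤ bodyGauge n F u := by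
  have hu' : 0 < ‖u‖ := norm_pos_iff.2 hu
  have hx : ‖u‖⁻¹ • u ∈ USphere n := by simp [norm_smul, hu'.ne']
  have h1 := hF.inner_le_gauge hx u
  have h2 := hFM _ hx
  have h3 := hF.pos _ hx
  have h4 : ⟪‖u‖⁻¹ • u, u⟫ = ‖u‖ := by
    rw [inner_smul_left, real_inner_self_eq_norm_sq]; simp; field_simp
  rw [h4] at h1
  rw [div_le_iff₀ hM]
  have h5 : 0 < bodyGauge n F u := by
    by_contra h; push Not at h
    nlinarith
  nlinarith

lemma IsSupportFn.exists_upper (hF : IsSupportFn n F) :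
    ∃ M, 0 < M ∧ ∀ x ∈ USphere n, F x ≤ M := by
  obtain ⟨M, hM⟩ := (isCompact_sphere (0 : Euc n) 1).bddAbove_image
    (hF.smooth.continuousOn.mono fun x hx => USphere_ne_zero hx)
  exact ⟨max M 1, by positivity, fun x hx => (hM (mem_image_of_mem _ hx)).trans (le_max_left _ _)⟩

lemma IsSupportFn.gauge_pos (hF : IsSupportFn n F) {u : Euc n} (hu : u ≠ 0) :
    0 < bodyGauge n F u := by
  obtain ⟨M, hM, hFM⟩ := hF.exists_upper
  exact (div_pos (norm_pos_iff.2 hu) hM).trans_le (hF.norm_div_le_gauge hM hFM hu)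

lemma IsSupportFn.gauge_sub_le [NeZero n] (hF : IsSupportFn n F) {m : ℝ} (hm : 0 < m)
    (hFm : ∀ x ∈ USphere n, m ≤ F x) (u v : Euc n) :
    bodyGauge n F u - bodyGauge n F v ≤ ‖u - v‖ / m := by
  rw [sub_le_iff_le_add]
  refine hF.gauge_le fun x hx => ?_
  have h1 := hF.inner_le_gauge hx v
  have h2 : ⟪x, u⟫ = ⟪x, u - v⟫ + ⟪x, v⟫ := by rw [inner_sub_right]; ring
  have h3 : ⟪x, u - v⟫ ≤ ‖u - v‖ := by
    have := real_inner_le_norm x (u - v)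
    rwa [show ‖x‖ = 1 by simpa using hx, one_mul] at this
  have h4 : ‖u - v‖ ≤ ‖u - v‖ / m * F x := by
    rw [div_mul_eq_mul_div, le_div_iff₀ hm]
    exact mul_le_mul_of_nonneg_left (hFm x hx) (norm_nonneg _)
  rw [h2, add_mul]; linarith

lemma IsSupportFn.abs_gauge_sub_le [NeZero n] (hF : IsSupportFn n F) {m : ℝ} (hm : 0 < m)
    (hFm : ∀ x ∈ USphere n, m ≤ F x) (u v : Euc n) :
    |bodyGauge n F u - bodyGauge n F v| ≤ ‖u - v‖ / m :=
  abs_sub_le_iff.2 ⟨hF.gauge_sub_le hm hFm u v, norm_sub_rev u v ▸ hF.gauge_sub_le hm hFm v u⟩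

lemma bodyGauge_smul {c : ℝ} (hc : 0 < c) (u : Euc n) :
    bodyGauge n F (c • u) = c * bodyGauge n F u := by
  rw [bodyGauge, bodyGauge, ← smul_eq_mul, ← Real.sSup_smul_of_nonneg hc.le]
  congr 1
  ext a
  simp only [mem_image, inner_smul_right, Set.mem_smul_set, smul_eq_mul, exists_exists_and_eq_and]
  simp only [mul_div_assoc]

lemma IsSupportFn.radialFn_eq [NeZero n] (hF : IsSupportFn n F) {u : Euc n} (hu : u ≠ 0) :
    radialFn n F u = (bodyGauge n F u)⁻¹ := by
  have hN := hF.gauge_pos hu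
  have : {r : ℝ | 0 < r ∧ r • u ∈ bodyOf n F} = Ioc 0 (bodyGauge n F u)⁻¹ := by
    ext r
    simp only [mem_ofPred_eq, mem_Ioc, bodyOf]
    refine and_congr_right fun hr => ?_
    rw [le_inv_comm₀ hr hN, inv_eq_one_div, le_div_iff₀' hr]
    constructor
    · intro h
      rw [← bodyGauge_smul hr]
      exact hF.gauge_le fun x hx => by simpa using h x hx
    · intro h x hx
      have h1 := hF.inner_le_gauge hx (r • u)
      rw [bodyGauge_smul hr] at h1
      have := hF.pos x hx
      nlinarith
  rw [radialFn, this, csSup_Ioc (inv_pos.2 hN)]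

/-- The direction `∇F x / ‖∇F x‖` of the boundary point with outer normal `x`. -/
def gaussDir (n : ℕ) (F : Euc n → ℝ) (x : Euc n) : Euc n :=
  ‖gradient F x‖⁻¹ • gradient F x

lemma IsSupportFn.norm_gaussDir (hF : IsSupportFn n F) {x : Euc n} (hx : x ∈ USphere n) :
    ‖gaussDir n F x‖ = 1 := by
  have := hF.gradient_ne_zero (x := x) (by simpa using hx)
  simp [gaussDir, norm_smul, this]

lemma IsSupportFn.gauge_gaussDir [NeZero n] (hF : IsSupportFn n F) {x : Euc n}
    (hx : x ∈ USphere n) : bodyGauge n F (gaussDir n F x) = ‖gradient F x‖⁻¹ := by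
  have hx1 : ‖x‖ = 1 := by simpa using hx
  have hr : 0 < ‖gradient F x‖⁻¹ :=
    inv_pos.2 (norm_pos_iff.2 (hF.gradient_ne_zero hx1))
  apply le_antisymm
  · refine hF.gauge_le fun y hy => ?_
    rw [gaussDir, inner_smul_right, real_inner_comm]
    exact mul_le_mul_of_nonneg_left (hF.inner_gradient_le hx1 (by simpa using hy)) hr.le
  · have h := hF.inner_le_gauge hx (gaussDir n F x)
    rw [gaussDir, inner_smul_right, real_inner_comm,
      hF.inner_gradient_self (USphere_ne_zero hx)] at h
    exact le_of_mul_le_mul_right h (hF.pos x hx)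

/-- A unit vector at which the gauge is attained is a normal at the boundary point in direction
`u`; this is Fermat's rule for `y ↦ bodyGauge u * F y - ⟪y, u⟫ ≥ 0`. -/
lemma IsSupportFn.exists_gaussDir [NeZero n] (hF : IsSupportFn n F) {u : Euc n}
    (hu : u ∈ USphere n) : ∃ x ∈ USphere n, gaussDir n F x = u := by
  obtain ⟨x, hx, hx'⟩ := hF.exists_gauge u
  have hx0 := USphere_ne_zero hx
  refine ⟨x, hx, ?_⟩
  set N := bodyGauge n F u with hN
  have hNpos : 0 < N := hF.gauge_pos (USphere_ne_zero hu)
  have hmin : IsLocalMin (fun y => N * F y - ⟪u, y⟫) x := by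
    filter_upwards [isOpen_compl_singleton.mem_nhds hx0] with y hy
    have hy' : 0 < ‖y‖ := norm_pos_iff.2 hy
    have h1 := hF.inner_le_gauge (x := ‖y‖⁻¹ • y) (by simp [norm_smul, hy'.ne']) u
    rw [hF.homog _ (inv_pos.2 hy'), inner_smul_left] at h1
    have h2 : ⟪y, u⟫ ≤ N * F y := by
      refine le_of_mul_le_mul_left (a := ‖y‖⁻¹) ?_ (inv_pos.2 hy')
      calc _ ≤ _ := h1
        _ = _ := by ring
    rw [real_inner_comm] at h2
    rw [hx', real_inner_comm u x]
    linarith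
  have hd : HasFDerivAt (fun y => N * F y - ⟪u, y⟫) (N • fderiv ℝ F x - innerSL ℝ u) x :=
    ((hF.differentiableAt hx0).hasFDerivAt.const_mul N).sub (innerSL ℝ u).hasFDerivAt
  have h0 := hmin.hasFDerivAt_eq_zero hd
  have hu' : u = N • gradient F x := by
    refine ext_inner_right ℝ fun v => ?_
    rw [inner_smul_left, inner_grad_eq]
    have := congrArg (fun L => L v) h0
    simp at this ⊢
    linarith
  have hnorm : N * ‖gradient F x‖ = 1 := by
    have := congrArg norm hu'
    rw [norm_smul, Real.norm_of_nonneg hNpos.le] at this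
    rw [← this]; simpa using hu
  rw [gaussDir, inv_eq_of_mul_eq_one_left hnorm, ← hu']

lemma IsSupportFn.gaussDir_injOn (hF : IsSupportFn n F) : InjOn (gaussDir n F) (USphere n) := by
  intro x hx y hy hxy
  by_contra hne
  have hx1 : ‖x‖ = 1 := by simpa using hx
  have hy1 : ‖y‖ = 1 := by simpa using hy
  have hrx := norm_pos_iff.2 (hF.gradient_ne_zero hx1)
  have hry := norm_pos_iff.2 (hF.gradient_ne_zero hy1)
  have h1 := hF.inner_gradient_lt hx1 hy1 hne
  have h2 := hF.inner_gradient_lt hy1 hx1 (Ne.symm hne)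
  rw [← hF.inner_gradient_self (USphere_ne_zero hy)] at h1
  rw [← hF.inner_gradient_self (USphere_ne_zero hx)] at h2
  have ex : gradient F x = ‖gradient F x‖ • gaussDir n F x := by
    rw [gaussDir, smul_inv_smul₀ hrx.ne']
  have ey : gradient F y = ‖gradient F y‖ • gaussDir n F x := by
    rw [hxy, gaussDir, smul_inv_smul₀ hry.ne']
  have px : 0 < ⟪gradient F x, x⟫ := by
    rw [hF.inner_gradient_self (USphere_ne_zero hx)]; exact hF.pos x hx
  have py : 0 < ⟪gradient F y, y⟫ := by
    rw [hF.inner_gradient_self (USphere_ne_zero hy)]; exact hF.pos y hy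
  rw [ex, ey, inner_smul_left, inner_smul_left] at h1
  rw [ex, ey, inner_smul_left, inner_smul_left] at h2
  rw [ex, inner_smul_left] at px
  rw [ey, inner_smul_left] at py
  simp only [conj_trivial] at h1 h2 px py
  have qx := (mul_pos_iff_of_pos_left hrx).1 px
  have qy := (mul_pos_iff_of_pos_left hry).1 py
  have := lt_of_mul_lt_mul_right h1 qy.le
  have := lt_of_mul_lt_mul_right h2 qx.le
  linarith

/-! ### Gradient bounds from bounds on the support function -/

lemma norm_sphGrad_le (G : Euc n → ℝ) {x : Euc n} (hx : x ∈ USphere n) :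
    ‖sphGrad n G x‖ ≤ ‖gradient G x‖ := by
  have hx1 : ‖x‖ = 1 := by simpa using hx
  refine le_of_sq_le_sq ?_ (norm_nonneg _)
  rw [sphGrad, norm_sub_sq_real, inner_smul_right, norm_smul, hx1]
  simp
  nlinarith [sq_nonneg ⟪gradient G x, x⟫]

lemma IsSupportFn.norm_gradient_le (hF : IsSupportFn n F) {M : ℝ}
    (hFM : ∀ x ∈ USphere n, F x ≤ M) {x : Euc n} (hx : x ∈ USphere n) :
    ‖gradient F x‖ ≤ M := by
  have hx1 : ‖x‖ = 1 := by simpa using hx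
  have h := hF.inner_gradient_le hx1 (hF.norm_gaussDir hx)
  have hr := norm_pos_iff.2 (hF.gradient_ne_zero hx1)
  have e : ⟪gradient F x, gaussDir n F x⟫ = ‖gradient F x‖ := by
    rw [gaussDir, inner_smul_right, real_inner_self_eq_norm_sq]; field_simp
  rw [e] at h
  exact h.trans (hFM _ (by simpa using hF.norm_gaussDir hx))

/-- The gauge is Lipschitz and bounded below near the sphere, so its reciprocal has a bounded
gradient wherever it is differentiable; elsewhere `gradient` is `0`. -/
lemma IsSupportFn.norm_gradient_radialFn_le [NeZero n] (hF : IsSupportFn n F) {m M : ℝ}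
    (hm : 0 < m) (hM : 0 < M) (hFm : ∀ x ∈ USphere n, m ≤ F x) (hFM : ∀ x ∈ USphere n, F x ≤ M)
    {u : Euc n} (hu : u ∈ USphere n) : ‖gradient (radialFn n F) u‖ ≤ 2 * M ^ 2 / m := by
  have hu1 : ‖u‖ = 1 := by simpa using hu
  rw [gradient, LinearIsometryEquiv.norm_map]
  refine norm_fderiv_le_of_lip' ℝ (by positivity) ?_
  have hnb : ∀ᶠ v in 𝓝 u, 1 / 2 < ‖v‖ :=
    (continuous_norm.continuousAt (x := u)).eventually_const_lt (by simp only [hu1]; norm_num)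
  filter_upwards [hnb] with v hv
  have hv0 : v ≠ 0 := norm_pos_iff.1 (by linarith)
  rw [hF.radialFn_eq hv0, hF.radialFn_eq (USphere_ne_zero hu)]
  have hNv := hF.norm_div_le_gauge hM hFM hv0
  have hNu := hF.norm_div_le_gauge hM hFM (USphere_ne_zero hu)
  have hl := hF.abs_gauge_sub_le hm hFm u v
  have pv := hF.gauge_pos hv0
  have pu := hF.gauge_pos (USphere_ne_zero hu)
  rw [Real.norm_eq_abs, inv_sub_inv pv.ne' pu.ne', abs_div, abs_of_pos (mul_pos pv pu),
    div_le_iff₀ (mul_pos pv pu)]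
  rw [norm_sub_rev] at hl
  refine hl.trans ?_
  have h1 : 1 / (2 * M) ≤ bodyGauge n F v := by
    refine le_trans ?_ hNv
    rw [div_le_div_iff₀ (by positivity) hM]; nlinarith
  have h2 : 1 / M ≤ bodyGauge n F u := by rwa [hu1] at hNu
  have h3 : 1 / (2 * M) * (1 / M) ≤ bodyGauge n F v * bodyGauge n F u :=
    mul_le_mul h1 h2 (by positivity) pv.le
  calc ‖v - u‖ / m = 2 * M ^ 2 / m * ‖v - u‖ * (1 / (2 * M) * (1 / M)) := by field_simp
    _ ≤ _ := mul_le_mul_of_nonneg_left h3 (by positivity)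

end Gauge

/-! ### Change of variables under the radial Gauss map -/

section ChangeOfVariables

variable {n : ℕ} {F : Euc n → ℝ}

instance : IsFiniteMeasure (sphMeasure n) := by unfold sphMeasure; infer_instance

/-- Polar coordinates for a radially constant integrand on the star-shaped region with radial
function `ρ`. -/
lemma lintegral_cone [NeZero n] {ρ : Euc n → ℝ} {k : Euc n → ENNReal}
    (hρ : Measurable fun u : USphere n => ρ u) (hk : Measurable fun u : USphere n => k u)
    (hρ0 : ∀ u ∈ USphere n, 0 < ρ u) (hA : MeasurableSet {x : Euc n | x ≠ 0 ∧ ‖x‖ < ρ (‖x‖⁻¹ • x)}) :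
    ∫⁻ x in {x : Euc n | x ≠ 0 ∧ ‖x‖ < ρ (‖x‖⁻¹ • x)}, k (‖x‖⁻¹ • x) =
      ∫⁻ u : USphere n, k u * ENNReal.ofReal (ρ u ^ n / n) ∂(sphMeasure n) := by
  set A := {x : Euc n | x ≠ 0 ∧ ‖x‖ < ρ (‖x‖⁻¹ • x)} with hAdef
  have hmp := (volume : Measure (Euc n)).measurePreserving_homeomorphUnitSphereProd
  rw [← lintegral_indicator hA]
  have hdim : Module.finrank ℝ (Euc n) = n := by simp
  have hn : n - 1 + 1 = n := Nat.succ_pred (NeZero.ne n)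
  let g : USphere n × Ioi (0 : ℝ) → ENNReal :=
    {p : USphere n × Ioi (0 : ℝ) | (p.2 : ℝ) < ρ p.1}.indicator fun p => k p.1
  have hgm : Measurable g := by
    refine Measurable.indicator (hk.comp measurable_fst) ?_
    exact measurableSet_lt (measurable_subtype_coe.comp measurable_snd) (hρ.comp measurable_fst)
  have e1 : ∫⁻ x, A.indicator (fun x => k (‖x‖⁻¹ • x)) x =
      ∫⁻ x : ({(0 : Euc n)}ᶜ : Set (Euc n)), A.indicator (fun x => k (‖x‖⁻¹ • x)) x
        ∂((volume : Measure (Euc n)).comap Subtype.val) := by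
    rw [lintegral_subtype_comap (measurableSet_singleton _).compl, restrict_compl_singleton]
  have e2 : ∀ x : ({(0 : Euc n)}ᶜ : Set (Euc n)), A.indicator (fun x => k (‖x‖⁻¹ • x)) x =
      g (homeomorphUnitSphereProd (Euc n) x) := by
    intro x
    have hx : (x : Euc n) ≠ 0 := x.2
    simp only [g, indicator, hAdef, mem_ofPred_eq, homeomorphUnitSphereProd_apply_fst_coe,
      homeomorphUnitSphereProd_apply_snd_coe, ne_eq, hx, not_false_eq_true, true_and]
  rw [e1, lintegral_congr e2, hmp.lintegral_comp hgm, lintegral_prod _ hgm.aemeasurable]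
  refine lintegral_congr fun u => ?_
  have e3 : (fun r : Ioi (0 : ℝ) => g (u, r)) =
      (Iio (⟨ρ u, hρ0 u u.2⟩ : Ioi (0 : ℝ))).indicator fun _ => k u := by
    ext r
    simp only [g, indicator, mem_ofPred_eq, mem_Iio, ← Subtype.coe_lt_coe]
  rw [e3, lintegral_indicator measurableSet_Iio, setLIntegral_const, Measure.volumeIoiPow_apply_Iio,
    hdim, hn]
  congr 3
  have : ((n - 1 : ℕ) : ℝ) + 1 = n := by exact_mod_cast congrArg (Nat.cast : ℕ → ℝ) hn
  rw [this]

/-- The weight `h det(∇²h + hI) / (|∇h|² + h²)^{n/2}`, the Jacobian of `gaussDir`,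
which is the inverse of the radial Gauss map. -/
def gaussJac (n : ℕ) (F : Euc n → ℝ) (x : Euc n) : ℝ :=
  F x * sphDet n F x / ‖gradient F x‖ ^ n

lemma IsSupportFn.gaussJac_pos (hF : IsSupportFn n F) {x : Euc n} (hx : x ∈ USphere n) :
    0 < gaussJac n F x := by
  have hx1 : ‖x‖ = 1 := by simpa using hx
  have := hF.pos x hx
  have := hF.sphDet_pos hx1
  have := norm_pos_iff.2 (hF.gradient_ne_zero hx1)
  unfold gaussJac; positivity

lemma IsSupportFn.continuousOn (hF : IsSupportFn n F) : ContinuousOn F (USphere n) :=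
  hF.smooth.continuousOn.mono fun _ hx => USphere_ne_zero hx

lemma IsSupportFn.continuousOn_gradient (hF : IsSupportFn n F) :
    ContinuousOn (gradient F) (USphere n) :=
  hF.contDiffOn_gradient.continuousOn.mono fun _ hx => USphere_ne_zero hx

lemma IsSupportFn.continuousOn_gaussJac (hF : IsSupportFn n F) :
    ContinuousOn (gaussJac n F) (USphere n) := by
  have h1 : ContinuousOn (sphDet n F) (USphere n) := by
    have h2 : ContinuousOn (fun x => hessOp n F x + (innerSL ℝ x).smulRight x) (USphere n) := by
      refine (hF.continuousOn_hessOp.mono fun _ hx => USphere_ne_zero hx).add ?_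
      exact Continuous.continuousOn
        (((ContinuousLinearMap.smulRightL ℝ (Euc n) (Euc n)).continuous₂).comp
          ((innerSL ℝ).continuous.prodMk continuous_id))
    exact ContinuousLinearMap.continuous_det.comp_continuousOn h2
  refine (hF.continuousOn.mul h1).div (hF.continuousOn_gradient.norm.pow n) fun x hx => ?_
  have := norm_pos_iff.2 (hF.gradient_ne_zero (x := x) (by simpa using hx))
  positivity

lemma IsSupportFn.continuousOn_gaussDir (hF : IsSupportFn n F) :
    ContinuousOn (gaussDir n F) (USphere n) := by
  refine (hF.continuousOn_gradient.norm.inv₀ fun x hx => ?_).smul hF.continuousOn_gradient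
  exact norm_ne_zero_iff.2 (hF.gradient_ne_zero (x := x) (by simpa using hx))

/-- The `1`-homogeneous extension of the inverse Gauss map `x ↦ ∇F x`. -/
def gaussExt (n : ℕ) (F : Euc n → ℝ) (x : Euc n) : Euc n := ‖x‖ • gradient F x

/-- The derivative of `gaussExt`, expressed at the normalised point. -/
def gaussExtDeriv (n : ℕ) (F : Euc n → ℝ) (x : Euc n) : Euc n →L[ℝ] Euc n :=
  hessOp n F (‖x‖⁻¹ • x) + (innerSL ℝ (‖x‖⁻¹ • x)).smulRight (gradient F (‖x‖⁻¹ • x))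

lemma IsSupportFn.hasFDerivAt_gaussExt (hF : IsSupportFn n F) {x : Euc n} (hx : x ≠ 0) :
    HasFDerivAt (gaussExt n F) (gaussExtDeriv n F x) x := by
  have hr : 0 < ‖x‖ := norm_pos_iff.2 hx
  have hnorm : HasFDerivAt (fun y : Euc n => ‖y‖) (‖x‖⁻¹ • innerSL ℝ x) x := by
    have h1 := (hasStrictFDerivAt_norm_sq x).hasFDerivAt.sqrt (by positivity)
    simp only [Real.sqrt_sq (norm_nonneg _)] at h1
    refine h1.congr_fderiv ?_
    ext v
    simp
    field_simp
  refine (hnorm.smul (hF.hasFDerivAt_gradient hx)).congr_fderiv ?_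
  ext1 v
  have e1 := hF.hessOp_smul (inv_pos.2 hr) x
  rw [gaussExtDeriv, hF.gradient_smul (inv_pos.2 hr), ← e1, smul_smul, mul_inv_cancel₀ hr.ne']
  simp

/-- With `M = Hess F + x ⊗ x`, the derivative is `T ∘ M` for the rank-one perturbation
`T w = w + ⟪x, w⟫ (∇F x - x)`, and `det T = ⟪x, ∇F x⟫ = F x`. -/
lemma IsSupportFn.det_gaussExtDeriv (hF : IsSupportFn n F) {x : Euc n} (hx : x ≠ 0) :
    (gaussExtDeriv n F x).det = F (‖x‖⁻¹ • x) * sphDet n F (‖x‖⁻¹ • x) := by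
  have hr : 0 < ‖x‖ := norm_pos_iff.2 hx
  rw [gaussExtDeriv]
  set z := ‖x‖⁻¹ • x with hz
  have hz1 : ‖z‖ = 1 := by simp [hz, norm_smul, hr.ne']
  have hz0 : z ≠ 0 := by rintro h; simp [h] at hz1
  have e : ((hessOp n F z + (innerSL ℝ z).smulRight (gradient F z) : Euc n →L[ℝ] Euc n) :
      Euc n →ₗ[ℝ] Euc n) =
      LinearMap.transvection (innerSL ℝ z : Euc n →ₗ[ℝ] ℝ) (gradient F z - z) ∘ₗ
        ((hessOp n F z + (innerSL ℝ z).smulRight z : Euc n →L[ℝ] Euc n) :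
          Euc n →ₗ[ℝ] Euc n) := by
    ext1 v
    simp [LinearMap.transvection.apply, inner_add_right, inner_smul_right, hF.inner_hessOp hz0,
      hz1, smul_sub]
  rw [ContinuousLinearMap.det, e, LinearMap.det_comp, LinearMap.transvection.det, sphDet]
  congr 1
  have := hF.inner_gradient_self hz0
  rw [real_inner_comm] at this
  simp [inner_sub_right, this, hz1]

/-- The map `gaussDir` pushes `gaussJac · σ` forward to the surface measure `σ`. -/
lemma IsSupportFn.lintegral_gaussDir [NeZero n] (hF : IsSupportFn n F) {k : Euc n → ENNReal}
    (hk : Measurable k) :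
    ∫⁻ u : USphere n, k u ∂(sphMeasure n) =
      ∫⁻ x : USphere n, k (gaussDir n F x) * ENNReal.ofReal (gaussJac n F x) ∂(sphMeasure n) := by
  have hn0 : (0 : ℝ) < n := by exact_mod_cast Nat.pos_of_ne_zero (NeZero.ne n)
  have hnorm : ∀ x : Euc n, x ≠ 0 → ‖x‖⁻¹ • x ∈ USphere n := fun x hx => by
    simp [norm_smul, hx]
  have hpos : ∀ x ∈ USphere n, 0 < ‖gradient F x‖ := fun x hx =>
    norm_pos_iff.2 (hF.gradient_ne_zero (by simpa using hx))
  set B := {x : Euc n | x ≠ 0 ∧ ‖x‖ < (fun _ => (1 : ℝ)) (‖x‖⁻¹ • x)} with hB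
  set A := {x : Euc n | x ≠ 0 ∧ ‖x‖ < (fun y => ‖gradient F y‖⁻¹) (‖x‖⁻¹ • x)} with hA
  have hBm : MeasurableSet B :=
    (isOpen_compl_singleton.inter (isOpen_lt continuous_norm continuous_const)).measurableSet
  have hA' : A = {x : Euc n | x ≠ 0 ∧ ‖gaussExt n F x‖ < 1} := by
    ext x
    simp only [hA, mem_ofPred_eq]
    refine and_congr_right fun hx => ?_
    rw [hF.gradient_smul (inv_pos.2 (norm_pos_iff.2 hx)), gaussExt, norm_smul, norm_norm,
      lt_inv_comm₀ (norm_pos_iff.2 hx), ← one_div, lt_div_iff₀' (norm_pos_iff.2 hx)]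
    have := hpos _ (hnorm x hx)
    rwa [hF.gradient_smul (inv_pos.2 (norm_pos_iff.2 hx))] at this
  have hAm : MeasurableSet A := by
    rw [hA']
    have hc : ContinuousOn (fun x => ‖gaussExt n F x‖) {(0 : Euc n)}ᶜ := fun x hx =>
      (hF.hasFDerivAt_gaussExt hx).continuousAt.norm.continuousWithinAt
    exact (hc.isOpen_inter_preimage isOpen_compl_singleton isOpen_Iio).measurableSet
  -- `gaussExt` maps the ray through `x` onto the ray through `gaussDir x`
  have hdir : ∀ x : Euc n, x ≠ 0 →
      ‖gaussExt n F x‖⁻¹ • gaussExt n F x = gaussDir n F (‖x‖⁻¹ • x) := by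
    intro x hx
    have hr := norm_pos_iff.2 hx
    rw [gaussDir, hF.gradient_smul (inv_pos.2 hr), gaussExt, norm_smul, norm_norm, mul_inv,
      smul_smul]
    congr 1
    field_simp
  have hnE : ∀ x : Euc n, x ≠ 0 →
      ‖gaussExt n F x‖ = ‖x‖ * ‖gradient F (‖x‖⁻¹ • x)‖ := by
    intro x hx
    rw [gaussExt, norm_smul, norm_norm, hF.gradient_smul (inv_pos.2 (norm_pos_iff.2 hx))]
  have hinj : InjOn (gaussExt n F) A := by
    intro x hx y hy hxy
    have h1 := hdir x hx.1
    rw [hxy, hdir y hy.1] at h1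
    have h2 := hF.gaussDir_injOn (hnorm y hy.1) (hnorm x hx.1) h1
    have h3 := hnE x hx.1
    rw [hxy, hnE y hy.1, h2] at h3
    have h4 := mul_right_cancel₀ (hpos _ (hnorm x hx.1)).ne' h3
    rw [h4] at h2
    exact (smul_right_injective _ (inv_ne_zero (norm_ne_zero_iff.2 hx.1)) h2).symm
  have himg : gaussExt n F '' A = B := by
    ext y
    constructor
    · rintro ⟨x, hx, rfl⟩
      have hx' := hx
      rw [hA'] at hx'
      refine ⟨?_, hx'.2⟩
      rw [← norm_ne_zero_iff, hnE x hx.1]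
      exact mul_ne_zero (norm_ne_zero_iff.2 hx.1) (hpos _ (hnorm x hx.1)).ne'
    · rintro ⟨hy0, hy1⟩
      obtain ⟨z, hz, hzy⟩ := hF.exists_gaussDir (hnorm y hy0)
      have hz1 : ‖z‖ = 1 := by simpa using hz
      have hz0 := USphere_ne_zero hz
      have hy' := norm_pos_iff.2 hy0
      have hc : 0 < ‖y‖ * ‖gradient F z‖⁻¹ := mul_pos hy' (inv_pos.2 (hpos z hz))
      have e : gaussExt n F ((‖y‖ * ‖gradient F z‖⁻¹) • z) = y := by
        rw [gaussExt, hF.gradient_smul hc, norm_smul, hz1, mul_one, Real.norm_of_nonneg hc.le,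
          mul_smul]
        change ‖y‖ • gaussDir n F z = y
        rw [hzy, smul_inv_smul₀ hy'.ne']
      refine ⟨_, ?_, e⟩
      rw [hA', mem_ofPred_eq, e]
      exact ⟨smul_ne_zero hc.ne' hz0, hy1⟩
  have hkd : Measurable fun u : USphere n =>
      k (gaussDir n F u) * ENNReal.ofReal (F u * sphDet n F u) := by
    have m1 : Measurable fun u : USphere n => gaussDir n F u :=
      hF.continuousOn_gaussDir.domRestrict.measurable
    have m2 : Measurable fun u : USphere n => F u * sphDet n F u := by
      have : (fun u : USphere n => F u * sphDet n F u) =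
          fun u : USphere n => gaussJac n F u * ‖gradient F u‖ ^ n := by
        ext u
        have := hpos u u.2
        rw [gaussJac]; field_simp
      rw [this]
      exact (hF.continuousOn_gaussJac.mul
        (hF.continuousOn_gradient.norm.pow n)).domRestrict.measurable
    exact (hk.comp m1).mul m2.ennreal_ofReal
  have e1 := lintegral_cone (n := n) (ρ := fun _ => 1) (k := k) measurable_const
    (hk.comp measurable_subtype_coe) (fun _ _ => one_pos) hBm
  have e2 := lintegral_cone (n := n) (ρ := fun y => ‖gradient F y‖⁻¹)
    (k := fun u => k (gaussDir n F u) * ENNReal.ofReal (F u * sphDet n F u))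
    (hF.continuousOn_gradient.norm.inv₀ fun x hx => (hpos x hx).ne').domRestrict.measurable hkd
    (fun u hu => inv_pos.2 (hpos u hu)) hAm
  have e3 := lintegral_image_eq_lintegral_abs_det_fderiv_mul volume hAm
    (fun x hx => (hF.hasFDerivAt_gaussExt hx.1).hasFDerivWithinAt) hinj
    (fun y => k (‖y‖⁻¹ • y))
  rw [himg] at e3
  have e4 : ∫⁻ x in A, ENNReal.ofReal |(gaussExtDeriv n F x).det| *
        k (‖gaussExt n F x‖⁻¹ • gaussExt n F x) =
      ∫⁻ x in A, (fun u => k (gaussDir n F u) * ENNReal.ofReal (F u * sphDet n F u))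
        (‖x‖⁻¹ • x) := by
    refine setLIntegral_congr_fun hAm fun x hx => ?_
    have h1 := hF.pos _ (hnorm x hx.1)
    have h2 := hF.sphDet_pos (x := ‖x‖⁻¹ • x) (by simpa using hnorm x hx.1)
    simp only []
    rw [hdir x hx.1, hF.det_gaussExtDeriv hx.1, abs_of_pos (mul_pos h1 h2), mul_comm]
  rw [e4, e2, e1] at e3
  have c0 : ENNReal.ofReal (1 / n) ≠ 0 := by
    rw [Ne, ENNReal.ofReal_eq_zero, not_le]; positivity
  refine (ENNReal.mul_left_inj c0 ENNReal.ofReal_ne_top).1 ?_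
  rw [← lintegral_mul_const' _ _ ENNReal.ofReal_ne_top,
    ← lintegral_mul_const' _ _ ENNReal.ofReal_ne_top]
  refine Eq.trans ?_ (e3.trans ?_)
  · simp
  · refine lintegral_congr fun u => ?_
    have h1 := hF.gaussJac_pos u.2
    have h2 : 0 < F u * sphDet n F u :=
      mul_pos (hF.pos u u.2) (hF.sphDet_pos (by simp))
    rw [mul_assoc, mul_assoc, ← ENNReal.ofReal_mul h1.le, ← ENNReal.ofReal_mul h2.le]
    congr 2
    rw [gaussJac, inv_pow]; field_simp

lemma IsSupportFn.integral_gaussDir [NeZero n] (hF : IsSupportFn n F) {g : Euc n → ℝ}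
    (hg : ContinuousOn g (USphere n)) :
    ∫ u : USphere n, g u ∂(sphMeasure n) =
      ∫ x : USphere n, gaussJac n F x * g (gaussDir n F x) ∂(sphMeasure n) := by
  let a : USphere n → USphere n := fun x => ⟨gaussDir n F x, by simp [hF.norm_gaussDir x.2]⟩
  have ha : Measurable a :=
    (hF.continuousOn_gaussDir.domRestrict.measurable).subtype_mk
  have hw : Measurable fun x : USphere n => gaussJac n F x :=
    hF.continuousOn_gaussJac.domRestrict.measurable
  have hmap : ((sphMeasure n).withDensity fun x => ENNReal.ofReal (gaussJac n F x)).map a =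
      sphMeasure n := by
    ext s hs
    have hs' : MeasurableSet (Subtype.val '' s : Set (Euc n)) :=
      (MeasurableEmbedding.subtype_coe isClosed_sphere.measurableSet).measurableSet_image.2 hs
    have h1 := hF.lintegral_gaussDir (k := (Subtype.val '' s).indicator 1)
      (measurable_one.indicator hs')
    rw [Measure.map_apply ha hs, withDensity_apply _ (ha hs), ← lintegral_indicator (ha hs),
      ← lintegral_indicator_one hs]
    refine Eq.trans ?_ (h1.symm.trans ?_)
    · refine lintegral_congr fun x => ?_
      by_cases hx : a x ∈ s
      · have : gaussDir n F x ∈ (Subtype.val '' s : Set (Euc n)) := ⟨a x, hx, rfl⟩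
        rw [indicator_of_mem (show x ∈ a ⁻¹' s from hx), indicator_of_mem this]; simp
      · have : gaussDir n F x ∉ (Subtype.val '' s : Set (Euc n)) := by
          rintro ⟨y, hy, hyx⟩
          exact hx (by rwa [show a x = y from Subtype.ext hyx.symm])
        rw [indicator_of_notMem (show x ∉ a ⁻¹' s from hx), indicator_of_notMem this]; simp
    · refine lintegral_congr fun x => ?_
      by_cases hx : x ∈ s
      · rw [indicator_of_mem hx, indicator_of_mem (mem_image_of_mem _ hx)]; simp
      · rw [indicator_of_notMem hx,
          indicator_of_notMem (mt Subtype.val_injective.mem_set_image.1 hx)]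
  conv_lhs => rw [← hmap]
  rw [integral_map ha.aemeasurable (show Measurable fun u : USphere n => g u from
    hg.domRestrict.measurable).aestronglyMeasurable,
    integral_withDensity_eq_integral_toReal_smul hw.ennreal_ofReal
      (ae_of_all _ fun _ => ENNReal.ofReal_lt_top)]
  refine integral_congr_ae (ae_of_all _ fun x => ?_)
  simp only [smul_eq_mul, a]
  rw [ENNReal.toReal_ofReal (hF.gaussJac_pos x.2).le]

end ChangeOfVariables

/-! ### Logarithmic integrals on the sphere -/

section LogIntegrals

variable {n : ℕ}

/-- By Fubini `-log |xᵢ|` is integrable on the cube `[-1, 1]ⁿ`, which contains the unit ball. -/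
lemma lintegral_log_coord_lt_top (i : Fin n) :
    ∫⁻ x in closedBall (0 : Euc n) 1, ENNReal.ofReal (-Real.log |x i|) < ⊤ := by
  let g : Fin n → ℝ → ℝ := fun j s =>
    (Icc (-1 : ℝ) 1).indicator (fun s => if j = i then -Real.log |s| else 1) s
  have hg : ∀ j, Integrable (g j) := by
    intro j
    rw [integrable_indicator_iff measurableSet_Icc]
    by_cases h : j = i
    · simp only [h, if_true, Real.log_abs]
      rw [← intervalIntegrable_iff_integrableOn_Icc_of_le (by norm_num)]
      exact intervalIntegral.intervalIntegrable_log'.neg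
    · simp only [h, if_false]
      exact integrableOn_const (by simp)
  have h1 : Integrable fun y : Fin n → ℝ => ∏ j, g j (y j) :=
    Integrable.fintype_prod hg
  have h2 := h1.lintegral_lt_top
  rw [← lintegral_indicator isClosed_closedBall.measurableSet,
    ← (PiLp.volume_preserving_toLp (Fin n)).lintegral_comp_emb
      (MeasurableEquiv.toLp 2 _).measurableEmbedding]
  refine lt_of_le_of_lt (lintegral_mono fun y => ?_) h2
  by_cases hy : WithLp.toLp 2 y ∈ closedBall (0 : Euc n) 1
  · rw [indicator_of_mem hy]
    have hy' : ∀ j, y j ∈ Icc (-1 : ℝ) 1 := fun j =>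
      abs_le.1 (by
        have := PiLp.norm_apply_le (WithLp.toLp 2 y : Euc n) j
        simp only [Real.norm_eq_abs] at this
        exact this.trans (by simpa using hy))
    have : ∏ j, g j (y j) = -Real.log |y i| := by
      rw [Finset.prod_eq_single i]
      · simp only [g, indicator_of_mem (hy' i), if_true]
      · intro j _ hj
        simp only [g, indicator_of_mem (hy' j), hj, if_false]
      · simp
    rw [this]
  · rw [indicator_of_notMem hy]; exact zero_le

lemma lintegral_log_inner (i : Fin n) {θ : Euc n} (hθ : θ ∈ USphere n) :
    ∫⁻ x in closedBall (0 : Euc n) 1, ENNReal.ofReal (-Real.log |⟪x, θ⟫|) =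
      ∫⁻ x in closedBall (0 : Euc n) 1, ENNReal.ofReal (-Real.log |x i|) := by
  have hθ1 : ‖θ‖ = 1 := by simpa using hθ
  let e : Euc n := EuclideanSpace.single i 1
  have he : ‖θ‖ = ‖e‖ := by simp [e, hθ1]
  let T : Euc n ≃ₗᵢ[ℝ] Euc n := (ℝ ∙ (θ - e))ᗮ.reflection
  have hT : T θ = e := Submodule.reflection_sub he
  symm
  rw [← lintegral_indicator isClosed_closedBall.measurableSet,
    ← lintegral_indicator isClosed_closedBall.measurableSet,
    ← T.measurePreserving.lintegral_comp_emb T.toHomeomorph.measurableEmbedding]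
  refine lintegral_congr fun x => ?_
  have h1 : T x i = ⟪x, θ⟫ := by
    rw [← T.inner_map_map x θ, hT]
    simp [e, EuclideanSpace.inner_single_right]
  simp only [indicator, mem_closedBall_zero_iff, T.norm_map, h1]

lemma measurable_log_inner (θ : Euc n) :
    Measurable fun u : USphere n => ENNReal.ofReal (-Real.log |⟪(u : Euc n), θ⟫|) := by
  have : Measurable fun u : USphere n => ⟪(u : Euc n), θ⟫ :=
    (by fun_prop : Continuous fun u : USphere n => ⟪(u : Euc n), θ⟫).measurable
  exact (Real.measurable_log.comp (continuous_abs.measurable.comp this)).neg.ennreal_ofReal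

/-- By rotation invariance the integrals of `-log |⟪u, θ⟫|` are bounded independently of `θ`. -/
lemma exists_log_bound (n : ℕ) [NeZero n] : ∃ K : ℝ, 0 ≤ K ∧ ∀ θ ∈ USphere n,
    ∫⁻ u : USphere n, ENNReal.ofReal (-Real.log |⟪(u : Euc n), θ⟫|) ∂(sphMeasure n) ≤
      ENNReal.ofReal K := by
  have hn0 : (0 : ℝ) < n := by exact_mod_cast Nat.pos_of_ne_zero (NeZero.ne n)
  let i : Fin n := 0
  set C := ∫⁻ x in closedBall (0 : Euc n) 1, ENNReal.ofReal (-Real.log |x i|) with hC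
  have hCt : C < ⊤ := lintegral_log_coord_lt_top i
  have c0 : ENNReal.ofReal (1 / n) ≠ 0 := by
    rw [Ne, ENNReal.ofReal_eq_zero, not_le]; positivity
  refine ⟨(C / ENNReal.ofReal (1 / n)).toReal, ENNReal.toReal_nonneg, fun θ hθ => ?_⟩
  rw [ENNReal.ofReal_toReal (ENNReal.div_lt_top hCt.ne c0).ne,
    ENNReal.le_div_iff_mul_le (Or.inl c0) (Or.inl ENNReal.ofReal_ne_top)]
  have hBm : MeasurableSet {x : Euc n | x ≠ 0 ∧ ‖x‖ < (fun _ => (1 : ℝ)) (‖x‖⁻¹ • x)} :=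
    (isOpen_compl_singleton.inter (isOpen_lt continuous_norm continuous_const)).measurableSet
  have e1 := lintegral_cone (n := n) (ρ := fun _ => 1)
    (k := fun u => ENNReal.ofReal (-Real.log |⟪u, θ⟫|)) measurable_const
    (measurable_log_inner θ) (fun _ _ => one_pos) hBm
  rw [← lintegral_mul_const' _ _ ENNReal.ofReal_ne_top]
  simp only [one_pow] at e1
  rw [← e1, hC, ← lintegral_log_inner i hθ]
  refine (setLIntegral_mono' hBm fun x hx => ENNReal.ofReal_le_ofReal ?_).trans
    (lintegral_mono_set fun x hx => by simpa using hx.2.le)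
  have hx0 : 0 < ‖x‖ := norm_pos_iff.2 hx.1
  rw [inner_smul_left, abs_mul]
  simp only [conj_trivial, abs_inv, abs_norm]
  rcases eq_or_ne ⟪x, θ⟫ 0 with h | h
  · simp [h]
  · refine neg_le_neg (Real.log_le_log (abs_pos.2 h) ?_)
    exact le_mul_of_one_le_left (abs_nonneg _) ((one_le_inv₀ hx0).2 hx.2.le)

/-- Great spheres are null sets. -/
lemma ae_inner_ne_zero [NeZero n] {θ : Euc n} (hθ : θ ∈ USphere n) :
    ∀ᵐ u : USphere n ∂(sphMeasure n), ⟪(u : Euc n), θ⟫ ≠ 0 := by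
  have hn0 : (0 : ℝ) < n := by exact_mod_cast Nat.pos_of_ne_zero (NeZero.ne n)
  have c0 : ENNReal.ofReal (1 / n) ≠ 0 := by
    rw [Ne, ENNReal.ofReal_eq_zero, not_le]; positivity
  let Z : Set (Euc n) := {x | ⟪x, θ⟫ = 0}
  have hZc : IsClosed Z := isClosed_eq (by fun_prop) continuous_const
  have hZ : volume Z = 0 := by
    have : Z = ((innerSL ℝ θ : Euc n →L[ℝ] ℝ) : Euc n →ₗ[ℝ] ℝ).ker := by
      ext x; simp [Z, real_inner_comm]
    rw [this]
    refine Measure.addHaar_submodule _ _ fun h => ?_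
    have h2 : θ ∈ ((innerSL ℝ θ : Euc n →L[ℝ] ℝ) : Euc n →ₗ[ℝ] ℝ).ker := h ▸ Submodule.mem_top
    exact USphere_ne_zero hθ (by simpa using h2)
  have hBm : MeasurableSet {x : Euc n | x ≠ 0 ∧ ‖x‖ < (fun _ => (1 : ℝ)) (‖x‖⁻¹ • x)} :=
    (isOpen_compl_singleton.inter (isOpen_lt continuous_norm continuous_const)).measurableSet
  have hm : Measurable (Z.indicator (1 : Euc n → ENNReal)) :=
    measurable_one.indicator hZc.measurableSet
  have e1 := lintegral_cone (n := n) (ρ := fun _ => 1) (k := Z.indicator 1) measurable_const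
    (hm.comp measurable_subtype_coe) (fun _ _ => one_pos) hBm
  have e2 : ∫⁻ x in {x : Euc n | x ≠ 0 ∧ ‖x‖ < (fun _ => (1 : ℝ)) (‖x‖⁻¹ • x)},
      Z.indicator (1 : Euc n → ENNReal) (‖x‖⁻¹ • x) = 0 := by
    refine le_antisymm ?_ zero_le
    refine (setLIntegral_mono' (g := Z.indicator 1) hBm fun x hx => ?_).trans
      ((setLIntegral_le_lintegral _ _).trans ?_)
    · have hx0 : ‖x‖ ≠ 0 := norm_ne_zero_iff.2 hx.1
      simp [Z, indicator, inner_smul_left, hx0]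
    · rw [lintegral_indicator_one hZc.measurableSet, hZ]
  rw [e2] at e1
  have e3 := (lintegral_eq_zero_iff
    ((hm.comp measurable_subtype_coe).mul_const _)).1 e1.symm
  filter_upwards [e3] with u hu hz
  have : Z.indicator (1 : Euc n → ENNReal) (u : Euc n) = 1 := indicator_of_mem (show (u : Euc n) ∈ Z from hz) _
  simp only [Function.comp_apply, this, one_pow, one_mul, Pi.zero_apply] at hu
  exact c0 hu

lemma abs_inner_le_one {u θ : Euc n} (hu : u ∈ USphere n) (hθ : θ ∈ USphere n) :
    |⟪u, θ⟫| ≤ 1 := by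
  have h1 : ‖u‖ = 1 := by simpa using hu
  have h2 : ‖θ‖ = 1 := by simpa using hθ
  simpa [h1, h2] using abs_real_inner_le_norm u θ

lemma neg_log_inner_nonneg {u θ : Euc n} (hu : u ∈ USphere n) (hθ : θ ∈ USphere n) :
    0 ≤ -Real.log |⟪u, θ⟫| :=
  neg_nonneg.2 (Real.log_nonpos (abs_nonneg _) (abs_inner_le_one hu hθ))

lemma integrable_log_inner [NeZero n] {θ : Euc n} (hθ : θ ∈ USphere n) :
    Integrable (fun u : USphere n => -Real.log |⟪(u : Euc n), θ⟫|) (sphMeasure n) := by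
  obtain ⟨K, -, hK⟩ := exists_log_bound n
  have hm : Measurable fun u : USphere n => -Real.log |⟪(u : Euc n), θ⟫| :=
    (Real.measurable_log.comp (continuous_abs.measurable.comp
      (by fun_prop : Continuous fun u : USphere n => ⟪(u : Euc n), θ⟫).measurable)).neg
  refine ⟨hm.aestronglyMeasurable, ?_⟩
  rw [hasFiniteIntegral_iff_ofReal (ae_of_all _ fun u => neg_log_inner_nonneg u.2 hθ)]
  exact (hK θ hθ).trans_lt ENNReal.ofReal_lt_top

/-- Markov's inequality for `-log |⟪u, θ⟫|`: bands around great spheres have small measure. -/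
lemma measure_band_le [NeZero n] {K δ : ℝ} {θ : Euc n}
    (hK : ∫⁻ u : USphere n, ENNReal.ofReal (-Real.log |⟪(u : Euc n), θ⟫|) ∂(sphMeasure n) ≤
      ENNReal.ofReal K) (hθ : θ ∈ USphere n) (hK0 : 0 ≤ K) (hδ : 0 < δ) (hδ1 : δ < 1) :
    (sphMeasure n).real {u : USphere n | |⟪(u : Euc n), θ⟫| < δ} ≤ K / -Real.log δ := by
  have hl : 0 < -Real.log δ := neg_pos.2 (Real.log_neg hδ hδ1)
  have hl' : ENNReal.ofReal (-Real.log δ) ≠ 0 := by simpa using hl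
  refine ENNReal.toReal_le_of_le_ofReal (by positivity) ?_
  rw [ENNReal.ofReal_div_of_pos hl]
  refine le_trans ?_ (ENNReal.div_le_div_right hK _)
  refine le_trans (measure_mono_ae ?_)
    (meas_ge_le_lintegral_div (measurable_log_inner θ).aemeasurable hl' ENNReal.ofReal_ne_top)
  filter_upwards [ae_inner_ne_zero hθ] with u hu hu'
  exact ENNReal.ofReal_le_ofReal (neg_le_neg (Real.log_le_log (abs_pos.2 hu) (le_of_lt hu')))

lemma integral_log_inner_le [NeZero n] {K : ℝ} {θ : Euc n}
    (hK : ∫⁻ u : USphere n, ENNReal.ofReal (-Real.log |⟪(u : Euc n), θ⟫|) ∂(sphMeasure n) ≤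
      ENNReal.ofReal K) (hθ : θ ∈ USphere n) (hK0 : 0 ≤ K) :
    ∫ u : USphere n, -Real.log |⟪(u : Euc n), θ⟫| ∂(sphMeasure n) ≤ K := by
  rw [integral_eq_lintegral_of_nonneg_ae (ae_of_all _ fun u => neg_log_inner_nonneg u.2 hθ)
    (integrable_log_inner hθ).1]
  exact ENNReal.toReal_le_of_le_ofReal hK0 hK

end LogIntegrals

/-! ### Monotone quantities along the flow -/

section Monotone

variable {n : ℕ}

lemma integrable_sphere {g : USphere n → ℝ} (hg : Continuous g) : Integrable g (sphMeasure n) :=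
  hg.integrable_of_hasCompactSupport (HasCompactSupport.of_compactSpace _)

lemma integral_one_sphere : ∫ _ : USphere n, (1 : ℝ) ∂(sphMeasure n) = sphArea n := by
  simp [sphArea, Measure.real]

lemma sphArea_pos [NeZero n] : 0 < sphArea n := by
  have : Nontrivial (Euc n) := by
    obtain ⟨x, hx⟩ := USphere_nonempty (n := n)
    exact ⟨x, 0, USphere_ne_zero hx⟩
  have h : (sphMeasure n) univ ≠ 0 := by
    rw [Ne, Measure.measure_univ_eq_zero]
    exact Measure.toSphere_ne_zero _
  exact ENNReal.toReal_pos h (measure_ne_top _ _)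

lemma continuousOn_integral_sphere {G : ℝ → USphere n → ℝ}
    (hG : ContinuousOn (fun p : ℝ × USphere n => G p.1 p.2) (Ici 0 ×ˢ univ)) :
    ContinuousOn (fun s => ∫ x, G s x ∂(sphMeasure n)) (Ici 0) := by
  rw [continuousOn_iff_continuous_domRestrict]
  have : LocallyCompactSpace (Ici (0 : ℝ)) := isClosed_Ici.locallyCompactSpace
  have h : Continuous (Function.uncurry fun (s : Ici (0 : ℝ)) (x : USphere n) => G s x) :=
    hG.comp_continuous (f := fun p : Ici (0 : ℝ) × USphere n => ((p.1 : ℝ), p.2))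
      (by fun_prop) fun p => ⟨p.1.2, mem_univ _⟩
  have := continuous_parametric_integral_of_continuous (μ := sphMeasure n) h isCompact_univ
  simp only [Measure.restrict_univ] at this
  exact this

lemma hasDerivAt_integral_sphere {G G' : ℝ → USphere n → ℝ}
    (hG : ContinuousOn (fun p : ℝ × USphere n => G p.1 p.2) (Ioi 0 ×ˢ univ))
    (hG' : ContinuousOn (fun p : ℝ × USphere n => G' p.1 p.2) (Ioi 0 ×ˢ univ))
    (hd : ∀ s, 0 < s → ∀ x, HasDerivAt (fun s => G s x) (G' s x) s) {t : ℝ} (ht : 0 < t) :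
    HasDerivAt (fun s => ∫ x, G s x ∂(sphMeasure n)) (∫ x, G' t x ∂(sphMeasure n)) t := by
  have hslice : ∀ {G : ℝ → USphere n → ℝ},
      ContinuousOn (fun p : ℝ × USphere n => G p.1 p.2) (Ioi 0 ×ˢ univ) →
      ∀ s, 0 < s → Continuous (G s) := fun hG s hs =>
    hG.comp_continuous (f := fun x : USphere n => (s, x)) (by fun_prop) fun x => ⟨hs, mem_univ _⟩
  have hsub : Icc (t / 2) (2 * t) ×ˢ (univ : Set (USphere n)) ⊆ Ioi 0 ×ˢ univ :=
    prod_mono_left fun s hs => (half_pos ht).trans_le hs.1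
  obtain ⟨C, hC⟩ := (isCompact_Icc.prod isCompact_univ).exists_bound_of_continuousOn
    (hG'.mono hsub)
  refine (hasDerivAt_integral_of_dominated_loc_of_deriv_le (bound := fun _ => C)
    (s := Icc (t / 2) (2 * t)) (Icc_mem_nhds (by linarith) (by linarith)) ?_
    (integrable_sphere (hslice hG t ht)) (hslice hG' t ht).aestronglyMeasurable ?_
    (integrable_const _) ?_).2
  · filter_upwards [Ioi_mem_nhds ht] with s hs using (hslice hG s hs).aestronglyMeasurable
  · exact ae_of_all _ fun x s hs => hC (s, x) ⟨hs, mem_univ _⟩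
  · exact ae_of_all _ fun x s hs => hd s ((half_pos ht).trans_le hs.1) x

/-- The right-hand side `h - η f (|∇h|² + h²)^{n/2} / (φ(1/h) det(∇²h + hI))` of the flow. -/
def flowSpeed (n : ℕ) (f : Euc n → ℝ) (φ : ℝ → ℝ) (F : Euc n → ℝ) (x : Euc n) : ℝ :=
  F x - flowEta n f φ F * f x * radTerm n F x ^ n / (φ (1 / F x) * sphDet n F x)

variable {f : Euc n → ℝ} {φ : ℝ → ℝ} {H : ℝ → Euc n → ℝ}

lemma IsSupportFn.flowSpeed_eq {F : Euc n → ℝ} (hF : IsSupportFn n F) {x : Euc n}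
    (hx : x ∈ USphere n) : flowSpeed n f φ F x =
      F x * (1 - flowEta n f φ F * (f x / φ (1 / F x)) / gaussJac n F x) := by
  have hx1 : ‖x‖ = 1 := by simpa using hx
  have h1 := (hF.pos x hx).ne'
  have h2 := (hF.sphDet_pos hx1).ne'
  have h3 := norm_ne_zero_iff.2 (hF.gradient_ne_zero hx1)
  rw [flowSpeed, hF.radTerm_eq hx1, gaussJac]
  rcases eq_or_ne (φ (1 / F x)) 0 with h4 | h4
  · rw [h4]; simp
  · field_simp

lemma IsFlowSol.continuousOn (hH : IsFlowSol n f φ (Ici 0) H) :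
    ContinuousOn (fun p : ℝ × USphere n => H p.1 p.2) (Ici 0 ×ˢ univ) :=
  hH.smooth.continuousOn.comp (f := fun p : ℝ × USphere n => (p.1, (p.2 : Euc n)))
    (by fun_prop) fun p hp => ⟨hp.1, USphere_ne_zero p.2.2⟩

lemma IsFlowSol.hasDerivAt (hH : IsFlowSol n f φ (Ici 0) H) {t : ℝ} (ht : 0 < t)
    {x : Euc n} (hx : x ∈ USphere n) :
    HasDerivAt (fun s => H s x) (flowSpeed n f φ (H t) x) t :=
  (hH.eqn t ht.le x hx).hasDerivAt (Ici_mem_nhds ht)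

lemma IsFlowSol.continuousOn_flowSpeed (hH : IsFlowSol n f φ (Ici 0) H) :
    ContinuousOn (fun p : ℝ × USphere n => flowSpeed n f φ (H p.1) p.2) (Ioi 0 ×ˢ univ) := by
  have ho : IsOpen (Ioi (0 : ℝ) ×ˢ {(0 : Euc n)}ᶜ) := isOpen_Ioi.prod isOpen_compl_singleton
  have hs : ContDiffOn ℝ (⊤ : ℕ∞) (fun p : ℝ × Euc n => H p.1 p.2) (Ioi 0 ×ˢ {(0 : Euc n)}ᶜ) :=
    hH.smooth.mono (prod_mono_left Ioi_subset_Ici_self)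
  have h1 := hs.continuousOn_fderiv_of_isOpen ho (by simp)
  have h2 : ContinuousOn
      (fun p : ℝ × Euc n => fderiv ℝ (fun p : ℝ × Euc n => H p.1 p.2) p ((1 : ℝ), (0 : Euc n)))
      (Ioi 0 ×ˢ {(0 : Euc n)}ᶜ) := h1.clm_apply continuousOn_const
  have h3 := h2.comp (f := fun p : ℝ × USphere n => (p.1, (p.2 : Euc n)))
    (s := Ioi 0 ×ˢ univ) (by fun_prop) fun p hp => ⟨hp.1, USphere_ne_zero p.2.2⟩
  refine h3.congr fun p hp => ?_
  have hp0 : (p.1, (p.2 : Euc n)) ∈ Ioi (0 : ℝ) ×ˢ {(0 : Euc n)}ᶜ :=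
    ⟨hp.1, USphere_ne_zero p.2.2⟩
  have h4 : HasFDerivAt (fun p : ℝ × Euc n => H p.1 p.2) _ (p.1, (p.2 : Euc n)) :=
    ((hs.contDiffAt (ho.mem_nhds hp0)).differentiableAt (by simp)).hasFDerivAt
  have h5 : HasDerivAt (fun s : ℝ => (s, (p.2 : Euc n))) ((1 : ℝ), (0 : Euc n)) p.1 :=
    (hasDerivAt_id _).prodMk (hasDerivAt_const _ _)
  have h6 := h4.comp_hasDerivAt p.1 h5
  exact (hH.hasDerivAt hp.1 p.2.2).unique h6

lemma IsSupportFn.continuous_sphere {F : Euc n → ℝ} (hF : IsSupportFn n F) :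
    Continuous fun x : USphere n => F x := hF.continuousOn.domRestrict

lemma IsSupportFn.continuous_gaussJac {F : Euc n → ℝ} (hF : IsSupportFn n F) :
    Continuous fun x : USphere n => gaussJac n F x := hF.continuousOn_gaussJac.domRestrict

lemma IsSupportFn.integral_gaussJac [NeZero n] {F : Euc n → ℝ} (hF : IsSupportFn n F) :
    ∫ x : USphere n, gaussJac n F x ∂(sphMeasure n) = sphArea n := by
  rw [← integral_one_sphere]
  simpa using (hF.integral_gaussDir (g := fun _ => 1) continuousOn_const).symm

lemma continuous_density (hf : ContinuousOn f (USphere n)) (hφ : ContinuousOn φ (Ioi 0))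
    (hφ0 : ∀ s ∈ Ioi (0 : ℝ), 0 < φ s) {F : Euc n → ℝ} (hF : IsSupportFn n F) :
    Continuous fun x : USphere n => f x / φ (1 / F x) := by
  have h1 : ∀ x : USphere n, 1 / F x ∈ Ioi (0 : ℝ) := fun x => one_div_pos.2 (hF.pos x x.2)
  refine Continuous.div hf.domRestrict ?_ fun x => (hφ0 _ (h1 x)).ne'
  exact hφ.comp_continuous
    (continuous_const.div hF.continuous_sphere fun x => (hF.pos x x.2).ne') h1

lemma flowEta_pos [NeZero n] (hf : ContinuousOn f (USphere n))
    (hf0 : ∀ x ∈ USphere n, 0 < f x) (hφ : ContinuousOn φ (Ioi 0))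
    (hφ0 : ∀ s ∈ Ioi (0 : ℝ), 0 < φ s) {F : Euc n → ℝ} (hF : IsSupportFn n F) :
    0 < flowEta n f φ F ∧
      flowEta n f φ F * ∫ x : USphere n, f x / φ (1 / F x) ∂(sphMeasure n) = sphArea n := by
  have hpos : 0 < ∫ x : USphere n, f x / φ (1 / F x) ∂(sphMeasure n) := by
    have hp : ∀ x : USphere n, 0 < f x / φ (1 / F x) := fun x =>
      div_pos (hf0 x x.2) (hφ0 _ (one_div_pos.2 (hF.pos x x.2)))
    obtain ⟨x, hx⟩ := USphere_nonempty (n := n)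
    rw [integral_pos_iff_support_of_nonneg (fun x => (hp x).le)
      (integrable_sphere (continuous_density hf hφ hφ0 hF))]
    have : Function.support (fun x : USphere n => f x / φ (1 / F x)) = univ :=
      eq_univ_of_forall fun x => (hp x).ne'
    rw [this]
    by_contra h
    have := sphArea_pos (n := n)
    rw [sphArea, nonpos_iff_eq_zero.1 (not_lt.1 h)] at this
    simp at this
  refine ⟨div_pos sphArea_pos hpos, ?_⟩
  rw [flowEta, sphInt, div_mul_cancel₀ _ hpos.ne']

/-- If `R' = 1 / (s φ)`, then `∫ f R(1/h)` is nondecreasing along the flow: its derivative is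
`∫ (η a² / w - a)` with `a = f / φ(1/h)` and `w = gaussJac`, and `η a² / w ≥ 2a - w / η`,
where both `∫ a` and `∫ w / η` equal `|S| / η`. -/
lemma IsFlowSol.monotoneOn_entropy [NeZero n] (hH : IsFlowSol n f φ (Ici 0) H)
    (hf : ContinuousOn f (USphere n))
    (hf0 : ∀ x ∈ USphere n, 0 < f x) (hφ : ContinuousOn φ (Ioi 0))
    (hφ0 : ∀ s ∈ Ioi (0 : ℝ), 0 < φ s) {R : ℝ → ℝ}
    (hR : ∀ s ∈ Ioi (0 : ℝ), HasDerivAt R (1 / (s * φ s)) s) :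
    MonotoneOn (fun t => ∫ x : USphere n, f x * R (1 / H t x) ∂(sphMeasure n)) (Ici 0) := by
  have hpos : ∀ t, 0 ≤ t → ∀ x : USphere n, 0 < H t x := fun t ht x => (hH.body t ht).pos x x.2
  have hRc : ContinuousOn R (Ioi 0) := fun s hs => (hR s hs).continuousAt.continuousWithinAt
  have hfc : ContinuousOn (fun p : ℝ × USphere n => f p.2) (Ici 0 ×ˢ univ) :=
    (hf.domRestrict.comp continuous_snd).continuousOn
  have hinv : ContinuousOn (fun p : ℝ × USphere n => 1 / H p.1 p.2) (Ici 0 ×ˢ univ) :=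
    continuousOn_const.div hH.continuousOn fun p hp => (hpos p.1 hp.1 p.2).ne'
  have hmaps : MapsTo (fun p : ℝ × USphere n => 1 / H p.1 p.2) (Ici 0 ×ˢ univ) (Ioi 0) :=
    fun p hp => one_div_pos.2 (hpos p.1 hp.1 p.2)
  have hG : ContinuousOn (fun p : ℝ × USphere n => f p.2 * R (1 / H p.1 p.2)) (Ici 0 ×ˢ univ) :=
    hfc.mul (hRc.comp hinv hmaps)
  have hsub : Ioi (0 : ℝ) ×ˢ (univ : Set (USphere n)) ⊆ Ici 0 ×ˢ univ :=
    prod_mono_left Ioi_subset_Ici_self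
  have hG' : ContinuousOn (fun p : ℝ × USphere n =>
      -(f p.2 / φ (1 / H p.1 p.2)) * (flowSpeed n f φ (H p.1) p.2 / H p.1 p.2))
      (Ioi 0 ×ˢ univ) := by
    refine ((hfc.div (hφ.comp hinv hmaps) fun p hp => (hφ0 _ (hmaps hp)).ne').neg.mono hsub).mul
      (hH.continuousOn_flowSpeed.div (hH.continuousOn.mono hsub) fun p hp =>
        (hpos p.1 hp.1.le p.2).ne')
  have hd : ∀ s, 0 < s → ∀ x : USphere n, HasDerivAt (fun s => f x * R (1 / H s x))
      (-(f x / φ (1 / H s x)) * (flowSpeed n f φ (H s) x / H s x)) s := by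
    intro s hs x
    have h0 := hpos s hs.le x
    have h1 : HasDerivAt (fun s => 1 / H s x) (-flowSpeed n f φ (H s) x / H s x ^ 2) s := by
      simpa only [one_div] using (hH.hasDerivAt hs x.2).fun_inv h0.ne'
    have h2 := ((hR (1 / H s x) (one_div_pos.2 h0)).comp s h1).const_mul (f x)
    refine h2.congr_deriv ?_
    have := (hφ0 _ (one_div_pos.2 h0)).ne'
    field_simp
  have hJ := fun {t : ℝ} (ht : 0 < t) =>
    hasDerivAt_integral_sphere (G := fun t (x : USphere n) => f x * R (1 / H t x))
      (G' := fun t (x : USphere n) =>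
        -(f x / φ (1 / H t x)) * (flowSpeed n f φ (H t) x / H t x)) (hG.mono hsub) hG' hd ht
  refine monotoneOn_of_deriv_nonneg (convex_Ici 0)
    (continuousOn_integral_sphere (G := fun t (x : USphere n) => f x * R (1 / H t x)) hG) ?_ ?_
  · intro t ht
    rw [interior_Ici] at ht
    exact (hJ ht).differentiableAt.differentiableWithinAt
  · intro t ht
    rw [interior_Ici] at ht
    rw [(hJ ht).deriv]
    have hF := hH.body t (mem_Ici.2 (le_of_lt ht))
    obtain ⟨hη, hη'⟩ := flowEta_pos hf hf0 hφ hφ0 hF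
    set η := flowEta n f φ (H t)
    have hac := continuous_density hf hφ hφ0 hF
    have hwc := hF.continuous_gaussJac
    have e : ∫ x : USphere n, (f x / φ (1 / H t x) - gaussJac n (H t) x / η) ∂(sphMeasure n) = 0 := by
      rw [integral_sub (integrable_sphere hac) ((integrable_sphere hwc).div_const _),
        integral_div, hF.integral_gaussJac, ← hη', mul_div_cancel_left₀ _ hη.ne', sub_self]
    rw [← e]
    refine integral_mono (integrable_sphere (hac.sub (hwc.div_const _))) (integrable_sphere ?_) ?_
    · exact hG'.comp_continuous (f := fun x : USphere n => (t, x)) (by fun_prop)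
        fun x => ⟨ht, mem_univ _⟩
    · intro x
      have h0 := (hF.pos x x.2).ne'
      have hw := hF.gaussJac_pos x.2
      simp only []
      rw [hF.flowSpeed_eq x.2, mul_div_cancel_left₀ _ h0]
      set a := f x / φ (1 / H t x)
      set w := gaussJac n (H t) x
      have h3 : -a * (1 - η * a / w) - (a - w / η) = (η * a - w) ^ 2 / (w * η) := by
        field_simp; ring
      have h4 : 0 ≤ (η * a - w) ^ 2 / (w * η) := by positivity
      linarith

lemma IsFlowSol.continuousOn_gauge (hH : IsFlowSol n f φ (Ici 0) H) :
    ContinuousOn (fun p : ℝ × USphere n => bodyGauge n (H p.1) p.2) (Ici 0 ×ˢ univ) := by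
  have h1 : Continuous fun q : (Ici (0 : ℝ) × USphere n) × USphere n =>
      ⟪(q.2 : Euc n), q.1.2⟫ / H q.1.1 q.2 := by
    refine Continuous.div (by fun_prop) ?_ fun q => ((hH.body _ q.1.1.2).pos _ q.2.2).ne'
    exact hH.continuousOn.comp_continuous
      (f := fun q : (Ici (0 : ℝ) × USphere n) × USphere n => ((q.1.1 : ℝ), q.2))
      (by fun_prop) fun q => ⟨q.1.1.2, mem_univ _⟩
  have h2 := isCompact_univ.continuous_sSup
    (f := fun (p : Ici (0 : ℝ) × USphere n) (x : USphere n) => ⟪(x : Euc n), p.2⟫ / H p.1 x) h1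
  have h3 : ∀ p : Ici (0 : ℝ) × USphere n,
      sSup ((fun x : USphere n => ⟪(x : Euc n), p.2⟫ / H p.1 x) '' univ) =
        bodyGauge n (H p.1) p.2 := by
    intro p
    rw [bodyGauge]
    congr 1
    ext r
    simp
  simp only [h3] at h2
  have h4 : Continuous fun p : ℝ × USphere n =>
      ((⟨max p.1 0, mem_Ici.2 (le_max_right _ _)⟩ : Ici (0 : ℝ)), p.2) := by fun_prop
  refine (h2.comp h4).continuousOn.congr fun p hp => ?_
  simp [max_eq_left (show 0 ≤ p.1 from hp.1)]

end Monotone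

section RadialEntropy

variable {n : ℕ} {f : Euc n → ℝ} {φ : ℝ → ℝ} {H : ℝ → Euc n → ℝ}

/-- The integral of the logarithm of the radial function `ρ = 1 / bodyGauge`. -/
def logRadial (n : ℕ) (F : Euc n → ℝ) : ℝ :=
  ∫ u : USphere n, -Real.log (bodyGauge n F u) ∂(sphMeasure n)

lemma IsSupportFn.continuousOn_gauge [NeZero n] {F : Euc n → ℝ} (hF : IsSupportFn n F) :
    ContinuousOn (bodyGauge n F) (USphere n) := by
  obtain ⟨x₀, hx₀, hmin⟩ := (isCompact_sphere (0 : Euc n) 1).exists_isMinOn USphere_nonempty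
    hF.continuousOn
  have hm := hF.pos x₀ hx₀
  have : LipschitzWith (Real.toNNReal (F x₀)⁻¹) (bodyGauge n F) := by
    refine LipschitzWith.of_dist_le_mul fun u v => ?_
    rw [Real.dist_eq, dist_eq_norm, Real.coe_toNNReal _ (inv_nonneg.2 hm.le), mul_comm,
      ← div_eq_mul_inv]
    exact hF.abs_gauge_sub_le hm (fun x hx => hmin hx) u v
  exact this.continuous.continuousOn

lemma IsSupportFn.integral_log_gauge [NeZero n] {F G : Euc n → ℝ} (hF : IsSupportFn n F)
    (hG : IsSupportFn n G) : logRadial n G =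
      ∫ x : USphere n, gaussJac n F x * -Real.log (bodyGauge n G (gaussDir n F x))
        ∂(sphMeasure n) :=
  hF.integral_gaussDir (g := fun u => -Real.log (bodyGauge n G u))
    (hG.continuousOn_gauge.log fun _ hu => (hG.gauge_pos (USphere_ne_zero hu)).ne').neg

/-- The radial function of the body of `G` in the direction of the boundary point of the body of
`F` with normal `x` is at most `ρ_F · G x / F x`, because the supporting half-space of the former
with normal `x` contains the body. -/
lemma IsSupportFn.logRadial_le [NeZero n] {F G : Euc n → ℝ} (hF : IsSupportFn n F)
    (hG : IsSupportFn n G) : logRadial n G ≤ logRadial n F +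
      (∫ x : USphere n, gaussJac n F x * Real.log (G x) ∂(sphMeasure n) -
        ∫ x : USphere n, gaussJac n F x * Real.log (F x) ∂(sphMeasure n)) := by
  have hw := hF.continuous_gaussJac
  have hα : ∀ x : USphere n, gaussDir n F x ∈ USphere n := fun x => by
    simp [hF.norm_gaussDir x.2]
  have c1 : ∀ {G : Euc n → ℝ}, IsSupportFn n G →
      Continuous fun x : USphere n => gaussJac n F x * Real.log (G x) := fun hG =>
    hw.mul (hG.continuous_sphere.log fun x => (hG.pos x x.2).ne')
  have c2 : ∀ {G : Euc n → ℝ}, IsSupportFn n G → Continuous fun x : USphere n =>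
      gaussJac n F x * -Real.log (bodyGauge n G (gaussDir n F x)) := fun hG =>
    hw.mul (((hG.continuousOn_gauge.comp_continuous hF.continuousOn_gaussDir.domRestrict
      hα).log fun x => (hG.gauge_pos (USphere_ne_zero (hα x))).ne').neg)
  rw [hF.integral_log_gauge hG, hF.integral_log_gauge hF,
    ← integral_sub (integrable_sphere (c1 hG)) (integrable_sphere (c1 hF)),
    ← integral_add (integrable_sphere (c2 hF)) (integrable_sphere ((c1 hG).fun_sub (c1 hF)))]
  refine integral_mono (integrable_sphere (c2 hG))
    (integrable_sphere ((c2 hF).fun_add ((c1 hG).fun_sub (c1 hF)))) fun x => ?_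
  have hx0 := USphere_ne_zero x.2
  have hg : 0 < ‖gradient F x‖ :=
    norm_pos_iff.2 (hF.gradient_ne_zero (by simp))
  have hFx := hF.pos x x.2
  have hGx := hG.pos x x.2
  have h1 := hG.inner_le_gauge x.2 (gaussDir n F x)
  have h2 : ⟪(x : Euc n), gaussDir n F x⟫ = ‖gradient F x‖⁻¹ * F x := by
    rw [gaussDir, inner_smul_right, real_inner_comm, hF.inner_gradient_self hx0]
  rw [h2] at h1
  have hgG := hG.gauge_pos (USphere_ne_zero (hα x))
  have h3 := Real.log_le_log (by positivity) h1
  rw [Real.log_mul (by positivity) hFx.ne', Real.log_mul hgG.ne' hGx.ne'] at h3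
  have h4 := hF.gaussJac_pos x.2
  simp only []
  rw [hF.gauge_gaussDir x.2]
  nlinarith

lemma IsFlowSol.hasDerivAt_integral_log [NeZero n] (hH : IsFlowSol n f φ (Ici 0) H)
    (hf : ContinuousOn f (USphere n))
    (hf0 : ∀ x ∈ USphere n, 0 < f x) (hφ : ContinuousOn φ (Ioi 0))
    (hφ0 : ∀ s ∈ Ioi (0 : ℝ), 0 < φ s) {t : ℝ} (ht : 0 < t) : HasDerivAt
      (fun s => ∫ x : USphere n, gaussJac n (H t) x * Real.log (H s x) ∂(sphMeasure n)) 0 t := by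
  have hpos : ∀ t, 0 ≤ t → ∀ x : USphere n, 0 < H t x := fun t ht x => (hH.body t ht).pos x x.2
  have hsub : Ioi (0 : ℝ) ×ˢ (univ : Set (USphere n)) ⊆ Ici 0 ×ˢ univ :=
    prod_mono_left Ioi_subset_Ici_self
  have hF := hH.body t (mem_Ici.2 ht.le)
  have hwc : ContinuousOn (fun p : ℝ × USphere n => gaussJac n (H t) p.2) (Ioi 0 ×ˢ univ) :=
    (hF.continuous_gaussJac.comp continuous_snd).continuousOn
  have h := hasDerivAt_integral_sphere
    (G := fun s (x : USphere n) => gaussJac n (H t) x * Real.log (H s x))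
    (G' := fun s (x : USphere n) => gaussJac n (H t) x * (flowSpeed n f φ (H s) x / H s x))
    (hwc.mul ((hH.continuousOn.mono hsub).log fun p hp => (hpos p.1 (le_of_lt hp.1) p.2).ne'))
    (hwc.mul (hH.continuousOn_flowSpeed.div (hH.continuousOn.mono hsub) fun p hp =>
      (hpos p.1 (le_of_lt hp.1) p.2).ne'))
    (fun s hs x => ((hH.hasDerivAt hs x.2).log (hpos s hs.le x).ne').const_mul _) ht
  convert h using 1
  obtain ⟨hη, hη'⟩ := flowEta_pos hf hf0 hφ hφ0 hF
  have e : ∀ x : USphere n, gaussJac n (H t) x * (flowSpeed n f φ (H t) x / H t x) =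
      gaussJac n (H t) x - flowEta n f φ (H t) * (f x / φ (1 / H t x)) := by
    intro x
    have h1 := (hF.pos x x.2).ne'
    have h2 := (hF.gaussJac_pos x.2).ne'
    rw [hF.flowSpeed_eq x.2, mul_div_cancel_left₀ _ h1, mul_sub, mul_one, mul_div_cancel₀ _ h2]
  simp only [e]
  rw [integral_sub (integrable_sphere hF.continuous_gaussJac)
    ((integrable_sphere (continuous_density hf hφ hφ0 hF)).const_mul _), integral_const_mul,
    hη', hF.integral_gaussJac, sub_self]

lemma IsFlowSol.continuousOn_log_gauge [NeZero n] (hH : IsFlowSol n f φ (Ici 0) H) : ContinuousOn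
    (fun p : ℝ × USphere n => -Real.log (bodyGauge n (H p.1) p.2)) (Ici 0 ×ˢ univ) := by
  refine ContinuousOn.neg (ContinuousOn.log hH.continuousOn_gauge fun p hp => ?_)
  exact ((hH.body p.1 hp.1).gauge_pos (USphere_ne_zero p.2.2)).ne'

/-- The integral of `log ρ` is nondecreasing: near a time `t`, `logRadial_le` bounds its increment
by that of `s ↦ ∫ w_t log H_s`, whose derivative at `s = t` is `∫ (w - η a) = 0`. -/
lemma IsFlowSol.logRadial_le [NeZero n] (hH : IsFlowSol n f φ (Ici 0) H)
    (hf : ContinuousOn f (USphere n))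
    (hf0 : ∀ x ∈ USphere n, 0 < f x) (hφ : ContinuousOn φ (Ioi 0))
    (hφ0 : ∀ s ∈ Ioi (0 : ℝ), 0 < φ s) {T : ℝ} (hT : 0 ≤ T) :
    logRadial n (H 0) ≤ logRadial n (H T) := by
  have hE : ContinuousOn (fun t => logRadial n (H t)) (Ici 0) :=
    continuousOn_integral_sphere (G := fun t (u : USphere n) => -Real.log (bodyGauge n (H t) u))
      hH.continuousOn_log_gauge
  have hQ := fun {t : ℝ} (ht : 0 < t) => hH.hasDerivAt_integral_log hf hf0 hφ hφ0 ht
  have hg : ContinuousOn (fun s => logRadial n (H (T - s))) (Icc 0 T) :=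
    hE.comp (f := fun s => T - s) (by fun_prop) fun s hs => mem_Ici.2 (sub_nonneg.2 hs.2)
  have key := image_le_of_liminf_slope_right_le_deriv_boundary
    (f := fun s => logRadial n (H (T - s))) (a := 0) (b := T)
    (B := fun _ => logRadial n (H T)) (B' := fun _ => 0)
    hg (by simp) continuousOn_const (fun x _ => hasDerivWithinAt_const _ _ _) ?_
    (right_mem_Icc.2 hT)
  · simpa using key
  intro s hs r hr
  have ht : 0 < T - s := sub_pos.2 hs.2
  have hF := hH.body (T - s) (mem_Ici.2 ht.le)
  have hq : HasDerivAt (fun z => ∫ x : USphere n,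
      gaussJac n (H (T - s)) x * Real.log (H (T - z) x) ∂(sphMeasure n)) 0 s := by
    have h1 : HasDerivAt (fun z => T - z) (-1) s := by
      simpa using (hasDerivAt_id s).const_sub T
    have h2 := HasDerivAt.comp s (h₂ := fun r => ∫ x : USphere n,
      gaussJac n (H (T - s)) x * Real.log (H r x) ∂(sphMeasure n)) (hQ ht) h1
    rw [zero_mul] at h2
    exact h2
  have hq' := (hasDerivAt_iff_tendsto_slope.1 hq).mono_left
    (nhdsWithin_mono s fun z (hz : s < z) => hz.ne')
  refine Eventually.frequently ?_
  filter_upwards [hq'.eventually_lt_const hr, Ioo_mem_nhdsGT hs.2] with z hz hz'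
  refine lt_of_le_of_lt ?_ hz
  have hG := hH.body (T - z) (mem_Ici.2 (sub_nonneg.2 hz'.2.le))
  rw [slope_def_field, slope_def_field]
  refine div_le_div_of_nonneg_right ?_ (sub_nonneg.2 hz'.1.le)
  have := hF.logRadial_le hG
  linarith

end RadialEntropy

/-! ### Uniform bounds for the support function -/

section UniformBounds

variable {n : ℕ} {f : Euc n → ℝ} {F : Euc n → ℝ}

/-- A symmetric body contains the segment from `-y` to `y`, where `y = ∇F x₀` has norm at least
`F x₀`. -/
lemma IsSupportFn.exists_mul_abs_inner_le (hF : IsSupportFn n F) (he : ∀ x, F (-x) = F x)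
    {x₀ : Euc n} (hx₀ : x₀ ∈ USphere n) :
    ∃ θ ∈ USphere n, ∀ x ∈ USphere n, F x₀ * |⟪x, θ⟫| ≤ F x := by
  have h1 : ‖x₀‖ = 1 := by simpa using hx₀
  have h2 : F x₀ ≤ ‖gradient F x₀‖ := by
    rw [← hF.inner_gradient_self (USphere_ne_zero hx₀)]
    simpa [h1] using real_inner_le_norm (gradient F x₀) x₀
  refine ⟨gaussDir n F x₀, by simp [hF.norm_gaussDir hx₀], fun x hx => ?_⟩
  have hx1 : ‖x‖ = 1 := by simpa using hx
  have h3 : |⟪gradient F x₀, x⟫| ≤ F x := by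
    refine abs_le.2 ⟨?_, hF.inner_gradient_le h1 hx1⟩
    have := hF.inner_gradient_le (y := -x) h1 (by simpa using hx1)
    rw [inner_neg_right, he] at this
    linarith
  have h4 : ‖gradient F x₀‖ * |⟪x, gaussDir n F x₀⟫| = |⟪gradient F x₀, x⟫| := by
    have h5 : ‖gradient F x₀‖ ≠ 0 := norm_ne_zero_iff.2 (hF.gradient_ne_zero h1)
    rw [gaussDir, inner_smul_right, abs_mul, abs_inv, abs_norm, mul_inv_cancel_left₀ h5,
      real_inner_comm]
  exact (mul_le_mul_of_nonneg_right h2 (abs_nonneg _)).trans (h4.le.trans h3)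

lemma IsSupportFn.abs_inner_le_gauge (hF : IsSupportFn n F) (he : ∀ x, F (-x) = F x)
    {x₀ : Euc n} (hx₀ : x₀ ∈ USphere n) (u : Euc n) :
    |⟪u, x₀⟫| ≤ bodyGauge n F u * F x₀ := by
  rw [real_inner_comm]
  refine abs_le.2 ⟨?_, hF.inner_le_gauge hx₀ u⟩
  have := hF.inner_le_gauge (x := -x₀) (by simpa using hx₀) u
  rw [inner_neg_left, he] at this
  linarith

/-- A symmetric body lies in the slab `|⟪y, x₀⟫| ≤ F x₀`, so a small value of `F` forces the
integral of `log ρ` to be very negative. -/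
lemma exists_lower_bound (n : ℕ) [NeZero n] (E : ℝ) : ∃ c, 0 < c ∧ ∀ F : Euc n → ℝ,
    IsSupportFn n F → (∀ x, F (-x) = F x) → E ≤ logRadial n F → ∀ x ∈ USphere n, c ≤ F x := by
  obtain ⟨K, hK0, hK⟩ := exists_log_bound n
  refine ⟨Real.exp ((E - K) / sphArea n), Real.exp_pos _, fun F hF he hE x₀ hx₀ => ?_⟩
  have hpos := hF.pos x₀ hx₀
  rw [← Real.le_log_iff_exp_le hpos, div_le_iff₀ sphArea_pos]
  have h1 : logRadial n F ≤ ∫ u : USphere n, (Real.log (F x₀) + -Real.log |⟪(u : Euc n), x₀⟫|)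
      ∂(sphMeasure n) := by
    refine integral_mono_ae (integrable_sphere ?_)
      ((integrable_const _).add (integrable_log_inner hx₀)) ?_
    · exact (hF.continuousOn_gauge.domRestrict.log fun u =>
        (hF.gauge_pos (USphere_ne_zero u.2)).ne').neg
    · filter_upwards [ae_inner_ne_zero hx₀] with u hu
      have h2 := Real.log_le_log (abs_pos.2 hu) (hF.abs_inner_le_gauge he hx₀ u)
      rw [Real.log_mul (hF.gauge_pos (USphere_ne_zero u.2)).ne' hpos.ne'] at h2
      linarith
  rw [integral_add (integrable_const _) (integrable_log_inner hx₀)] at h1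
  have h2 := integral_log_inner_le (hK x₀ hx₀) hx₀ hK0
  have h3 : ∫ _ : USphere n, Real.log (F x₀) ∂(sphMeasure n) = Real.log (F x₀) * sphArea n := by
    simp [sphArea, Measure.real, mul_comm]
  linarith

lemma exists_band (n : ℕ) [NeZero n] {ε : ℝ} (hε : 0 < ε) : ∃ δ, 0 < δ ∧ ∀ θ ∈ USphere n,
    (sphMeasure n).real {u : USphere n | |⟪(u : Euc n), θ⟫| < δ} ≤ ε := by
  obtain ⟨K, hK0, hK⟩ := exists_log_bound n
  have hD : 0 < K / ε + 1 := by positivity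
  refine ⟨Real.exp (-(K / ε + 1)), Real.exp_pos _, fun θ hθ => ?_⟩
  refine (measure_band_le (hK θ hθ) hθ hK0 (Real.exp_pos _)
    (Real.exp_lt_one_iff.2 (neg_lt_zero.2 hD))).trans ?_
  rw [Real.log_exp, neg_neg, div_le_iff₀ hD, mul_add, mul_div_cancel₀ _ hε.ne']
  linarith

lemma measurableSet_band (θ : Euc n) (δ : ℝ) :
    MeasurableSet {u : USphere n | |⟪(u : Euc n), θ⟫| < δ} :=
  (isOpen_lt (by fun_prop) continuous_const).measurableSet

lemma continuous_entropy_density {R : ℝ → ℝ} (hf : ContinuousOn f (USphere n))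
    (hR : ContinuousOn R (Ioi 0)) (hF : IsSupportFn n F) :
    Continuous fun x : USphere n => f x * R (1 / F x) :=
  hf.domRestrict.mul (hR.comp_continuous
    (continuous_const.div hF.continuous_sphere fun x => (hF.pos x x.2).ne')
    fun x => one_div_pos.2 (hF.pos x x.2))

/-- Off a thin band a large value of the support function makes `R(1/F)` small, and in the band
`R(1/F) ≤ R(1/c)`. -/
lemma exists_upper_bound_mono [NeZero n] {R : ℝ → ℝ} (hf : ContinuousOn f (USphere n))
    (hf0 : ∀ x ∈ USphere n, 0 < f x) (hR : ContinuousOn R (Ioi 0)) (hR0 : ∀ s ∈ Ioi (0 : ℝ), 0 < R s)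
    (hmono : MonotoneOn R (Ioi 0)) (hlim : Tendsto R (𝓝[>] (0 : ℝ)) (𝓝 0))
    {A c : ℝ} (hA : 0 < A) (hc : 0 < c) : ∃ L, ∀ F : Euc n → ℝ, IsSupportFn n F →
      (∀ x, F (-x) = F x) → (∀ x ∈ USphere n, c ≤ F x) →
      A ≤ ∫ x : USphere n, f x * R (1 / F x) ∂(sphMeasure n) → ∀ x ∈ USphere n, F x ≤ L := by
  obtain ⟨x₁, hx₁, hmax⟩ := (isCompact_sphere (0 : Euc n) 1).exists_isMaxOn USphere_nonempty hf
  set M := f x₁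
  have hM : 0 < M := hf0 x₁ hx₁
  have hS := sphArea_pos (n := n)
  have hRc : 0 < R (1 / c) := hR0 _ (one_div_pos.2 hc)
  obtain ⟨δ, hδ, hband⟩ := exists_band n (ε := A / (4 * M * R (1 / c))) (by positivity)
  obtain ⟨s₀, hs₀, hs₀'⟩ := ((hlim.eventually_lt_const
    (show 0 < A / (4 * M * sphArea n) by positivity)).and self_mem_nhdsWithin).exists
  have hs₀p : 0 < s₀ := hs₀'
  refine ⟨1 / (s₀ * δ), fun F hF he hFc hint x₀ hx₀ => ?_⟩
  by_contra! hlt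
  obtain ⟨θ, hθ, hθF⟩ := hF.exists_mul_abs_inner_le he hx₀
  set Z := {u : USphere n | |⟪(u : Euc n), θ⟫| < δ}
  have hZ : MeasurableSet Z := measurableSet_band θ δ
  have hpt : ∀ x : USphere n, f x * R (1 / F x) ≤ M * R s₀ + Z.indicator (fun _ => M * R (1 / c)) x := by
    intro x
    have hFx := hF.pos x x.2
    have hfx : f x ≤ M := hmax x.2
    have hRx := hR0 (1 / F x) (one_div_pos.2 hFx)
    by_cases hx : x ∈ Z
    · rw [indicator_of_mem hx]
      have h1 : R (1 / F x) ≤ R (1 / c) := hmono (one_div_pos.2 hFx) (one_div_pos.2 hc)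
        (one_div_le_one_div_of_le hc (hFc x x.2))
      have h2 := mul_le_mul hfx h1 hRx.le hM.le
      have h3 := mul_pos hM (hR0 s₀ hs₀')
      linarith
    · rw [indicator_of_notMem hx, add_zero]
      refine mul_le_mul hfx (hmono (one_div_pos.2 hFx) hs₀' ?_) hRx.le hM.le
      have h4 : δ ≤ |⟪(x : Euc n), θ⟫| := not_lt.1 hx
      have h5 : 1 / (s₀ * δ) * δ ≤ F x :=
        (mul_le_mul hlt.le h4 hδ.le (hF.pos x₀ hx₀).le).trans (hθF x x.2)
      rw [one_div_le hFx hs₀p]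
      refine le_trans (le_of_eq ?_) h5
      field_simp
  have hi : Integrable (Z.indicator fun _ => M * R (1 / c)) (sphMeasure n) :=
    (integrable_const _).indicator hZ
  have h6 := integral_mono (integrable_sphere (continuous_entropy_density hf hR hF))
    ((integrable_const (M * R s₀)).add hi) hpt
  simp only [Pi.add_apply] at h6
  rw [integral_add (integrable_const _) hi, integral_indicator_const _ hZ, integral_const,
    smul_eq_mul, smul_eq_mul] at h6
  have h7 : (sphMeasure n).real univ = sphArea n := rfl
  rw [h7] at h6
  have h8 : (sphMeasure n).real Z * (M * R (1 / c)) ≤ A / 4 := by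
    refine (mul_le_mul_of_nonneg_right (hband θ hθ) (by positivity)).trans (le_of_eq ?_)
    field_simp
  have h9 : sphArea n * (M * R s₀) ≤ A / 4 := by
    have : R s₀ * (4 * M * sphArea n) < A := (lt_div_iff₀ (by positivity)).1 hs₀
    nlinarith
  linarith

/-- Off a thin band a large value of the support function makes `R(1/F)` large. -/
lemma exists_upper_bound_anti [NeZero n] {R : ℝ → ℝ} (hf : ContinuousOn f (USphere n))
    (hf0 : ∀ x ∈ USphere n, 0 < f x) (hR : ContinuousOn R (Ioi 0)) (hR0 : ∀ s ∈ Ioi (0 : ℝ), 0 < R s)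
    (hanti : AntitoneOn R (Ioi 0)) (hlim : Tendsto R (𝓝[>] (0 : ℝ)) atTop)
    (A : ℝ) : ∃ L, ∀ F : Euc n → ℝ, IsSupportFn n F → (∀ x, F (-x) = F x) →
      ∫ x : USphere n, f x * R (1 / F x) ∂(sphMeasure n) ≤ A → ∀ x ∈ USphere n, F x ≤ L := by
  obtain ⟨x₁, hx₁, hmin⟩ := (isCompact_sphere (0 : Euc n) 1).exists_isMinOn USphere_nonempty hf
  set m := f x₁
  have hm : 0 < m := hf0 x₁ hx₁
  have hS := sphArea_pos (n := n)
  obtain ⟨δ, hδ, hband⟩ := exists_band n (ε := sphArea n / 2) (by positivity)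
  obtain ⟨s₀, hs₀, hs₀'⟩ := ((hlim.eventually_gt_atTop (A / (m * (sphArea n / 2)))).and
    self_mem_nhdsWithin).exists
  have hs₀p : 0 < s₀ := hs₀'
  have hRs := hR0 s₀ hs₀'
  refine ⟨1 / (s₀ * δ), fun F hF he hint x₀ hx₀ => ?_⟩
  by_contra! hlt
  obtain ⟨θ, hθ, hθF⟩ := hF.exists_mul_abs_inner_le he hx₀
  set Z := {u : USphere n | |⟪(u : Euc n), θ⟫| < δ}
  have hZ : MeasurableSet Z := measurableSet_band θ δ
  have hpt : ∀ x : USphere n, m * R s₀ - Z.indicator (fun _ => m * R s₀) x ≤ f x * R (1 / F x) := by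
    intro x
    have hFx := hF.pos x x.2
    have hfx : m ≤ f x := hmin x.2
    have hRx := hR0 (1 / F x) (one_div_pos.2 hFx)
    by_cases hx : x ∈ Z
    · rw [indicator_of_mem hx, sub_self]
      exact (mul_pos (hf0 x x.2) hRx).le
    · rw [indicator_of_notMem hx, sub_zero]
      refine mul_le_mul hfx (hanti (one_div_pos.2 hFx) hs₀' ?_) hRs.le (hf0 x x.2).le
      have h4 : δ ≤ |⟪(x : Euc n), θ⟫| := not_lt.1 hx
      have h5 : 1 / (s₀ * δ) * δ ≤ F x :=
        (mul_le_mul hlt.le h4 hδ.le (hF.pos x₀ hx₀).le).trans (hθF x x.2)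
      rw [one_div_le hFx hs₀p]
      refine le_trans (le_of_eq ?_) h5
      field_simp
  have hi : Integrable (Z.indicator fun _ => m * R s₀) (sphMeasure n) :=
    (integrable_const _).indicator hZ
  have h6 := integral_mono ((integrable_const (m * R s₀)).sub hi)
    (integrable_sphere (continuous_entropy_density hf hR hF)) hpt
  simp only [Pi.sub_apply] at h6
  rw [integral_sub (integrable_const _) hi, integral_indicator_const _ hZ, integral_const,
    smul_eq_mul, smul_eq_mul] at h6
  have h7 : (sphMeasure n).real univ = sphArea n := rfl
  rw [h7] at h6
  have h8 : (sphMeasure n).real Z * (m * R s₀) ≤ sphArea n / 2 * (m * R s₀) :=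
    mul_le_mul_of_nonneg_right (hband θ hθ) (by positivity)
  have h9 : A < R s₀ * (m * (sphArea n / 2)) := (div_lt_iff₀ (by positivity)).1 hs₀
  linarith

end UniformBounds

/-! ### The gradient estimates -/

/-- uniform `C¹` estimates: the spherical gradients of the support and
radial functions are uniformly bounded. -/
theorem C1_estimates
    (n : ℕ) (hn : 2 ≤ n)
    (f : Euc n → ℝ) (φ : ℝ → ℝ) (h₀ : Euc n → ℝ)
    (hf_smooth : ContDiffOn ℝ (⊤ : ℕ∞) f {(0 : Euc n)}ᶜ)
    (hf_pos : ∀ x ∈ USphere n, 0 < f x)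
    (hf_even : ∀ x : Euc n, f (-x) = f x)
    (hφ_smooth : ContDiffOn ℝ (⊤ : ℕ∞) φ (Ioi 0))
    (hφ_pos : ∀ s ∈ Ioi (0 : ℝ), 0 < φ s)
    (hh₀ : IsSupportFn n h₀) (hh₀e : ∀ x : Euc n, h₀ (-x) = h₀ x)
    (hcond : CondI n f φ h₀ ∨ CondII φ)
    (H : ℝ → Euc n → ℝ) (hH : IsFlowSol n f φ (Ici 0) H) (hH0 : H 0 = h₀) :
    ∃ C : ℝ, 0 < C ∧ ∀ t ∈ Ioi (0 : ℝ),
      (∀ x ∈ USphere n, ‖sphGrad n (H t) x‖ ≤ C) ∧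
      (∀ u ∈ USphere n, ‖sphGrad n (radialFn n (H t)) u‖ ≤ C) := by
  have : NeZero n := ⟨by omega⟩
  have hf : ContinuousOn f (USphere n) :=
    hf_smooth.continuousOn.mono fun _ hx => USphere_ne_zero hx
  have hφ : ContinuousOn φ (Ioi 0) := hφ_smooth.continuousOn
  obtain ⟨c, hc, hlow⟩ := exists_lower_bound n (logRadial n (H 0))
  have hlow' : ∀ t, 0 ≤ t → ∀ x ∈ USphere n, c ≤ H t x := fun t ht =>
    hlow (H t) (hH.body t ht) (hH.symm t ht) (hH.logRadial_le hf hf_pos hφ hφ_pos ht)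
  have hup : ∃ L, ∀ t, 0 ≤ t → ∀ x ∈ USphere n, H t x ≤ L := by
    rcases hcond with ⟨R, hR0, hmono, hlim, -, -, hder, Chat, hChat, -, hA⟩ |
      ⟨R, hR0, hanti, hlim, -, -, hder⟩
    · have hRc : ContinuousOn R (Ioi 0) := fun s hs =>
        (hder s hs).1.continuousAt.continuousWithinAt
      obtain ⟨L, hL⟩ := exists_upper_bound_mono hf hf_pos hRc hR0 hmono.monotoneOn hlim
        (hChat.trans hA) hc
      refine ⟨L, fun t ht => hL (H t) (hH.body t ht) (hH.symm t ht) (hlow' t ht) ?_⟩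
      rw [← hH0]
      exact hH.monotoneOn_entropy hf hf_pos hφ hφ_pos (fun s hs => (hder s hs).1)
        self_mem_Ici ht ht
    · have hRc : ContinuousOn R (Ioi 0) := fun s hs =>
        (hder s hs).1.continuousAt.continuousWithinAt
      obtain ⟨L, hL⟩ := exists_upper_bound_anti hf hf_pos hRc hR0 hanti.antitoneOn hlim
        (∫ x : USphere n, f x * R (1 / H 0 x) ∂(sphMeasure n))
      refine ⟨L, fun t ht => hL (H t) (hH.body t ht) (hH.symm t ht) ?_⟩
      have h := hH.monotoneOn_entropy hf hf_pos hφ hφ_pos (R := fun s => -R s)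
        (fun s hs => by simpa using (hder s hs).1.fun_neg) self_mem_Ici ht ht
      simpa only [mul_neg, integral_neg, neg_le_neg_iff] using h
  obtain ⟨L, hL⟩ := hup
  have hL0 : 0 < L := by
    obtain ⟨x, hx⟩ := USphere_nonempty (n := n)
    exact hc.trans_le ((hlow' 0 le_rfl x hx).trans (hL 0 le_rfl x hx))
  refine ⟨max L (2 * L ^ 2 / c), lt_max_of_lt_left hL0, fun t ht => ?_⟩
  have ht' : 0 ≤ t := le_of_lt ht
  have hF := hH.body t ht'
  refine ⟨fun x hx => ?_, fun u hu => ?_⟩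
  · exact (norm_sphGrad_le _ hx).trans
      ((hF.norm_gradient_le (hL t ht') hx).trans (le_max_left _ _))
  · exact (norm_sphGrad_le _ hu).trans
      ((hF.norm_gradient_radialFn_le hc hL0 (hlow' t ht') (hL t ht') hu).trans (le_max_right _ _))
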